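/- arXiv:1110.0807 — 2 statements merged into one kernel-verified Lean document; each statement's English description precedes it below -/
import Mathlib

section
/- Fix 1 ≤ q < ∞. Let f_n : S_n → ℝ be a sequence of class functions whose distributions under P_n converge weakly. Then there is a constant C such that for all n ≥ 2, sup_{a,b ∈ ℝ} |P_n[ρ̄_q(σ) ≤ a, f_n(σ) ≤ b] − P_n[ρ̄_q(σ) ≤ a]·P_n[f_n(σ) ≤ b]| ≤ C (log n)/n^{1/2}. -/
open scoped BigOperators Classical
open Finset Filter

/-- Probability of an event under the uniform measure on `S_n`. -/
noncomputable def Pn {n : ℕ} (p : Equiv.Perm (Fin n) → Prop) : ℝ :=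
  ((Finset.univ.filter p).card : ℝ) / (Fintype.card (Equiv.Perm (Fin n)) : ℝ)

/-- Expectation under the uniform measure on `S_n`. -/
noncomputable def En {n : ℕ} (g : Equiv.Perm (Fin n) → ℝ) : ℝ :=
  (∑ σ : Equiv.Perm (Fin n), g σ) / (Fintype.card (Equiv.Perm (Fin n)) : ℝ)

/-- Variance under the uniform measure on `S_n`. -/
noncomputable def VarN {n : ℕ} (g : Equiv.Perm (Fin n) → ℝ) : ℝ :=
  En (fun σ => (g σ - En g) ^ 2)

/-- Spearman's metric `ρ_q(σ) = Σ_i |σ(i) − i|^q`. -/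
noncomputable def rhoq (q : ℝ) {n : ℕ} (σ : Equiv.Perm (Fin n)) : ℝ :=
  ∑ i : Fin n, |((σ i : ℕ) : ℝ) - ((i : ℕ) : ℝ)| ^ q

/-- Normalized Spearman's metric `ρ̄_q = (ρ_q − E ρ_q)/√(Var ρ_q)`. -/
noncomputable def rhoqBar (q : ℝ) {n : ℕ} (σ : Equiv.Perm (Fin n)) : ℝ :=
  (rhoq q σ - En (rhoq q (n := n))) / Real.sqrt (VarN (rhoq q (n := n)))

/-!
Conjugating `σ` by an independent uniform `τ` preserves the uniform law and every class event, so
it suffices that the law of `ρ_q(τ σ τ⁻¹)` over `τ` hardly depends on `σ`.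

* A permutation built by successive insertions into cycles becomes an `n`-cycle after changing two
  values for each new cycle started, so on average at most `2 log n` values. Each changed value
  moves `ρ_q(τ σ τ⁻¹)` by at most `n ^ q`.
* For an `n`-cycle the law of `ρ_q(τ σ τ⁻¹)` does not depend on the cycle, and an interval of
  length `c n ^ q` has probability `O(1 / √n)`: cut the cycle into disjoint paths of four points.
  Exchanging the two middle values of `τ` on a path changes `ρ_q` by an amount that the other
  exchanges do not affect, and by a second moment bound a positive proportion of these amounts
  are at least `c n ^ q` outside an event of probability `O(1 / n)`, so the Littlewood–Offord
  inequality applies.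
* Hence changing the `d` values moves the distribution function by `O((d + 1) / √n)`, and averaging
  over `σ` gives `O(log n / √n)`.
-/

section UniformProbability

lemma exists_forall_comp_le_iff_le {α : Type*} [Finite α] [Nonempty α] (X : α → ℝ) {φ : ℝ → ℝ}
    (hφ : Monotone φ) (a : ℝ) : ∃ b, ∀ x, φ (X x) ≤ a ↔ X x ≤ b := by
  have := Fintype.ofFinite α
  by_cases h : ∃ x, φ (X x) ≤ a
  · obtain ⟨x₀, hx₀, hmax⟩ := exists_max_image {x | φ (X x) ≤ a} X (h.imp fun x hx => by simpa)
    simp only [mem_filter, mem_univ, true_and] at hx₀ hmax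
    exact ⟨X x₀, fun x => ⟨hmax x, fun hx => (hφ hx).trans hx₀⟩⟩
  · obtain ⟨x₀, -, hmin⟩ := exists_min_image univ X univ_nonempty
    push Not at h
    exact ⟨X x₀ - 1, fun x => ⟨fun hx => absurd hx (h x).not_ge,
      fun hx => by linarith [hmin x (mem_univ x)]⟩⟩

variable {α β : Type*} [Fintype α] [Fintype β]

/-- Probability of the event `p` under the uniform distribution on a finite type; it extends `Pn`
to sample spaces other than `S_n`. -/
noncomputable def unifProb (p : α → Prop) : ℝ :=
  𝔼 x, if p x then 1 else 0

lemma unifProb_eq_card_div (p : α → Prop) : unifProb p = #{x | p x} / Fintype.card α := by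
  rw [unifProb, Fintype.expect_eq_sum_div_card, sum_boole]

lemma Pn_eq_unifProb {n : ℕ} (p : Equiv.Perm (Fin n) → Prop) : Pn p = unifProb p :=
  (unifProb_eq_card_div p).symm

lemma unifProb_nonneg (p : α → Prop) : 0 ≤ unifProb p :=
  expect_nonneg fun x _ => by positivity

lemma unifProb_mono {p p' : α → Prop} (h : ∀ x, p x → p' x) : unifProb p ≤ unifProb p' :=
  expect_le_expect fun x _ => by
    split_ifs with hp hp'
    exacts [le_rfl, absurd (h x hp) hp', zero_le_one, le_rfl]

lemma unifProb_true [Nonempty α] : unifProb (fun _ : α => True) = 1 := by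
  simp only [unifProb, if_true, Fintype.expect_one]

lemma unifProb_le_one [Nonempty α] (p : α → Prop) : unifProb p ≤ 1 :=
  (unifProb_mono fun _ _ => trivial).trans_eq unifProb_true

lemma unifProb_comp_equiv (e : α ≃ β) (p : β → Prop) :
    unifProb (fun x => p (e x)) = unifProb p :=
  Fintype.expect_equiv e _ _ fun _ => rfl

lemma expect_unifProb_comm (p : α → β → Prop) :
    𝔼 x, unifProb (p x) = 𝔼 y, unifProb fun x => p x y :=
  expect_comm _ _ _

lemma expect_card_filter {ι : Type*} [Fintype ι] (p : ι → α → Prop) :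
    𝔼 x, (#{i | p i x} : ℝ) = ∑ i, unifProb (p i) := by
  simp only [unifProb, ← expect_sum_comm, sum_boole]

lemma unifProb_exists_mem_le_sum {ι : Type*} (s : Finset ι) (p : ι → α → Prop) :
    unifProb (fun x => ∃ i ∈ s, p i x) ≤ ∑ i ∈ s, unifProb (p i) := by
  simp only [unifProb, ← expect_sum_comm]
  refine expect_le_expect fun x _ => ?_
  have ite_nonneg : ∀ i ∈ s, (0 : ℝ) ≤ if p i x then 1 else 0 := fun i _ => by positivity
  split_ifs with h
  · obtain ⟨i, hi, hpi⟩ := h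
    exact (if_pos hpi).ge.trans (single_le_sum ite_nonneg hi)
  · exact sum_nonneg ite_nonneg

lemma expect_sub_sq_eq_variance_add [Nonempty α] (F : α → ℝ) (a : ℝ) :
    𝔼 x, (F x - a) ^ 2 = 𝔼 x, (F x - 𝔼 y, F y) ^ 2 + (𝔼 y, F y - a) ^ 2 := by
  set m := 𝔼 y, F y with hm
  calc 𝔼 x, (F x - a) ^ 2
      = 𝔼 x, ((F x - m) ^ 2 + 2 * (m - a) * (F x - m) + (m - a) ^ 2) := by congr! 2 with x; ring
    _ = 𝔼 x, (F x - m) ^ 2 + (m - a) ^ 2 := by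
        simp only [expect_add_distrib, ← mul_expect, expect_sub_distrib, Fintype.expect_const,
          ← hm, sub_self, mul_zero, add_zero]

lemma unifProb_lt_sub_le_expect_sq_div (F : α → ℝ) (m : ℝ) {t : ℝ} (ht : 0 < t) :
    unifProb (fun x => F x < m - t) ≤ (𝔼 x, (F x - m) ^ 2) / t ^ 2 := by
  rw [unifProb, expect_div]
  refine expect_le_expect fun x _ => ?_
  split_ifs with hx
  · rw [one_le_div (by positivity)]
    nlinarith
  · positivity

lemma unifProb_abs_sub_le_of_forall_mem_Ico_le {X : α → ℝ} {δ p : ℝ} (hδ : 0 < δ)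
    (hX : ∀ b, unifProb (fun x => X x ∈ Set.Ico b (b + δ)) ≤ p) (a : ℝ) {r : ℝ} (hr : 0 ≤ r) :
    unifProb (fun x => |X x - a| ≤ r) ≤ (2 * r / δ + 1) * p := by
  set N := ⌊2 * r / δ⌋₊ + 1 with hN
  have cover : ∀ x, |X x - a| ≤ r →
      ∃ i ∈ range N, X x ∈ Set.Ico (a - r + i * δ) (a - r + i * δ + δ) := by
    intro x hx
    obtain ⟨hlo, hhi⟩ := abs_le.mp hx
    have hnonneg : 0 ≤ (X x - (a - r)) / δ := div_nonneg (by linarith) hδ.le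
    have hfloor := (le_div_iff₀ hδ).mp (Nat.floor_le hnonneg)
    have hfloor' := (div_lt_iff₀ hδ).mp (Nat.lt_floor_add_one ((X x - (a - r)) / δ))
    refine ⟨⌊(X x - (a - r)) / δ⌋₊, mem_range.mpr (Nat.lt_succ_of_le (Nat.floor_le_floor ?_)), ?_⟩
    · gcongr
      linarith
    · constructor <;> linarith
  have hp : 0 ≤ p := (unifProb_nonneg _).trans (hX 0)
  have hNle : (N : ℝ) ≤ 2 * r / δ + 1 := by
    push_cast [hN]
    gcongr
    exact Nat.floor_le (by positivity)
  calc unifProb (fun x => |X x - a| ≤ r)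
      ≤ ∑ i ∈ range N, unifProb fun x => X x ∈ Set.Ico (a - r + i * δ) (a - r + i * δ + δ) :=
        (unifProb_mono cover).trans (unifProb_exists_mem_le_sum _ _)
    _ ≤ N * p := by simpa using sum_le_sum fun i (_ : i ∈ range N) => hX (a - r + i * δ)
    _ ≤ (2 * r / δ + 1) * p := by gcongr

lemma abs_unifProb_le_sub_unifProb_le {X Y : α → ℝ} {r : ℝ} (hXY : ∀ x, |X x - Y x| ≤ r)
    (a : ℝ) :
    |unifProb (fun x => X x ≤ a) - unifProb (fun x => Y x ≤ a)| ≤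
      unifProb fun x => |Y x - a| ≤ r := by
  simp only [unifProb, ← expect_sub_distrib]
  refine (abs_expect_le _ _).trans (expect_le_expect fun x _ => ?_)
  have hx := abs_le.mp (hXY x)
  split_ifs with hXa hYa hr hr hYa hr hr <;> norm_num
  all_goals exact hr (abs_le.mpr ⟨by linarith, by linarith⟩)

end UniformProbability

section ClassFunctions

variable {G : Type*} [Group G] [Fintype G] {A B : G → Prop}

lemma unifProb_and_eq_expect_conj (hA : ∀ τ σ, A (τ * σ * τ⁻¹) ↔ A σ) :
    unifProb (fun σ => B σ ∧ A σ) =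
      𝔼 σ, (if A σ then 1 else 0) * unifProb fun τ => B (τ * σ * τ⁻¹) := by
  calc unifProb (fun σ => B σ ∧ A σ)
      = 𝔼 _τ : G, unifProb fun σ => B σ ∧ A σ := (Fintype.expect_const _).symm
    _ = 𝔼 τ : G, unifProb fun σ => B (τ * σ * τ⁻¹) ∧ A σ := by
        refine expect_congr rfl fun τ _ => ?_
        rw [← unifProb_comp_equiv (MulAut.conj τ).toEquiv]
        simp only [MulEquiv.toEquiv_eq_coe, EquivLike.coe_coe, MulAut.conj_apply, hA]
    _ = 𝔼 σ, unifProb fun τ => B (τ * σ * τ⁻¹) ∧ A σ := expect_unifProb_comm _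
    _ = 𝔼 σ, (if A σ then 1 else 0) * unifProb fun τ => B (τ * σ * τ⁻¹) := by
        refine expect_congr rfl fun σ _ => ?_
        by_cases h : A σ <;> simp [h, unifProb]

lemma abs_unifProb_and_sub_mul_le (hA : ∀ τ σ, A (τ * σ * τ⁻¹) ↔ A σ) {t : ℝ} {ε : G → ℝ}
    (hB : ∀ σ, |unifProb (fun τ => B (τ * σ * τ⁻¹)) - t| ≤ ε σ) :
    |unifProb (fun σ => B σ ∧ A σ) - t * unifProb A| ≤ 𝔼 σ, ε σ := by
  rw [unifProb_and_eq_expect_conj hA, unifProb, mul_expect, ← expect_sub_distrib]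
  refine (abs_expect_le _ _).trans (expect_le_expect fun σ _ => ?_)
  split_ifs
  · simpa using hB σ
  · simpa using (abs_nonneg _).trans (hB σ)

lemma abs_unifProb_and_sub_unifProb_mul_unifProb_le (hA : ∀ τ σ, A (τ * σ * τ⁻¹) ↔ A σ)
    {t : ℝ} {ε : G → ℝ} (hB : ∀ σ, |unifProb (fun τ => B (τ * σ * τ⁻¹)) - t| ≤ ε σ) :
    |unifProb (fun σ => B σ ∧ A σ) - unifProb B * unifProb A| ≤ 2 * 𝔼 σ, ε σ := by
  have hjoint := abs_unifProb_and_sub_mul_le hA hB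
  have hmarginal : |unifProb B - t| ≤ 𝔼 σ, ε σ := by
    simpa [unifProb_true] using
      abs_unifProb_and_sub_mul_le (A := fun _ => True) (fun _ _ => Iff.rfl) hB
  calc |unifProb (fun σ => B σ ∧ A σ) - unifProb B * unifProb A|
      = |(unifProb (fun σ => B σ ∧ A σ) - t * unifProb A) - (unifProb B - t) * unifProb A| := by
        ring_nf
    _ ≤ |unifProb (fun σ => B σ ∧ A σ) - t * unifProb A| + |unifProb B - t| * unifProb A := by
        rw [← abs_of_nonneg (unifProb_nonneg A), ← abs_mul, abs_of_nonneg (unifProb_nonneg A)]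
        exact abs_sub _ _
    _ ≤ 𝔼 σ, ε σ + (𝔼 σ, ε σ) * 1 := by
        have hε := (abs_nonneg _).trans hmarginal
        gcongr
        exacts [unifProb_nonneg A, unifProb_le_one A]
    _ = 2 * 𝔼 σ, ε σ := by ring

end ClassFunctions

section LittlewoodOfford

lemma centralBinom_sq_mul_le_sixteen_pow (k : ℕ) : k.centralBinom ^ 2 * (2 * k + 1) ≤ 16 ^ k := by
  induction k with
  | zero => simp
  | succ k ih =>
    refine Nat.le_of_mul_le_mul_left (c := (k + 1) ^ 2) ?_ (by positivity)
    calc (k + 1) ^ 2 * ((k + 1).centralBinom ^ 2 * (2 * (k + 1) + 1))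
        = ((k + 1) * (k + 1).centralBinom) ^ 2 * (2 * (k + 1) + 1) := by ring
      _ = (4 * (2 * k + 1) * (2 * k + 3)) * (k.centralBinom ^ 2 * (2 * k + 1)) := by
          rw [Nat.succ_mul_centralBinom_succ]
          ring
      _ ≤ (16 * (k + 1) ^ 2) * 16 ^ k := Nat.mul_le_mul (by nlinarith) ih
      _ = (k + 1) ^ 2 * 16 ^ (k + 1) := by ring

lemma choose_half_sq_mul_le_four_pow (n : ℕ) : n.choose (n / 2) ^ 2 * n ≤ 4 ^ n := by
  obtain ⟨k, rfl | rfl⟩ := n.even_or_odd'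
  · have h := centralBinom_sq_mul_le_sixteen_pow k
    rw [Nat.centralBinom_eq_two_mul_choose] at h
    rw [Nat.mul_div_cancel_left k two_pos, pow_mul]
    exact (Nat.mul_le_mul_left _ (Nat.le_succ _)).trans h
  · have hchoose : (2 * k + 1).choose k ≤ 2 * k.centralBinom := by
      rw [← Nat.choose_symm_half, Nat.choose_succ_succ', two_mul k.centralBinom]
      exact Nat.add_le_add (Nat.choose_le_centralBinom _ _) (Nat.choose_le_centralBinom _ _)
    rw [show (2 * k + 1) / 2 = k by omega]
    calc (2 * k + 1).choose k ^ 2 * (2 * k + 1)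
        ≤ (2 * k.centralBinom) ^ 2 * (2 * k + 1) := by gcongr
      _ = 4 * (k.centralBinom ^ 2 * (2 * k + 1)) := by ring
      _ ≤ 4 * 16 ^ k := by gcongr; exact centralBinom_sq_mul_le_sixteen_pow k
      _ = 4 ^ (2 * k + 1) := by rw [pow_succ', pow_mul]; norm_num

lemma choose_half_le_two_pow_div_sqrt (n : ℕ) {g : ℝ} (hg : 0 < g) (hgn : g ≤ n) :
    (n.choose (n / 2) : ℝ) ≤ 2 ^ n / √g := by
  have h : (n.choose (n / 2) : ℝ) ^ 2 * n ≤ 4 ^ n := mod_cast choose_half_sq_mul_le_four_pow n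
  rw [le_div_iff₀ (Real.sqrt_pos.mpr hg)]
  refine le_of_sq_le_sq ?_ (by positivity)
  calc ((n.choose (n / 2) : ℝ) * √g) ^ 2 = (n.choose (n / 2) : ℝ) ^ 2 * g := by
        rw [mul_pow, Real.sq_sqrt hg.le]
    _ ≤ (n.choose (n / 2) : ℝ) ^ 2 * n := by gcongr
    _ ≤ (2 ^ n) ^ 2 := by rwa [← pow_mul, mul_comm n 2, pow_mul, show (2 : ℝ) ^ 2 = 4 by norm_num]

variable {ι : Type*} {D : ι → ℝ} {δ : ℝ}

lemma isAntichain_sum_mem_Ico (hδ : 0 < δ) (hD : ∀ j, δ ≤ D j) (a : ℝ) :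
    IsAntichain (· ⊆ ·) {S : Finset ι | ∑ j ∈ S, D j ∈ Set.Ico a (a + δ)} := by
  intro S hS T hT hne hST
  obtain ⟨j, hjT, hjS⟩ := exists_of_ssubset (hST.ssubset_of_ne hne)
  have hsum : ∑ i ∈ T \ S, D i + ∑ i ∈ S, D i = ∑ i ∈ T, D i := sum_sdiff hST
  have hgap : D j ≤ ∑ i ∈ T \ S, D i :=
    single_le_sum (fun i _ => hδ.le.trans (hD i)) (mem_sdiff.mpr ⟨hjT, hjS⟩)
  linarith [hS.1, hT.2, hD j]

variable [Fintype ι]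

lemma card_sum_mem_Ico_le_choose (hδ : 0 < δ) (hD : ∀ j, δ ≤ D j) (a : ℝ) :
    #{S : Finset ι | ∑ j ∈ S, D j ∈ Set.Ico a (a + δ)} ≤
      (Fintype.card ι).choose (Fintype.card ι / 2) :=
  IsAntichain.sperner (by simpa using isAntichain_sum_mem_Ico hδ hD a)

lemma card_sum_mem_Ico_le_choose_mul_two_pow (hδ : 0 < δ) (a : ℝ) :
    #{S : Finset ι | ∑ j ∈ S, D j ∈ Set.Ico a (a + δ)} ≤
      (#{j | δ ≤ D j}).choose (#{j | δ ≤ D j} / 2) *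
        2 ^ (Fintype.card ι - #{j | δ ≤ D j}) := by
  set L : Finset ι := {j | δ ≤ D j}
  rw [← card_compl, ← card_powerset]
  refine card_le_mul_card_image_of_maps_to (f := (· ∩ Lᶜ)) (by simp) _ fun R _ => ?_
  have sum_split : ∀ S : Finset ι, S ∩ Lᶜ = R →
      ∑ j ∈ S.subtype (· ∈ L), D j + ∑ j ∈ R, D j = ∑ j ∈ S, D j := by
    rintro S rfl
    rw [sum_subtype_eq_sum_filter, filter_mem_eq_inter, ← sdiff_eq_inter_compl,
      sum_inter_add_sum_sdiff]
  calc #{S ∈ {S | ∑ j ∈ S, D j ∈ Set.Ico a (a + δ)} | S ∩ Lᶜ = R}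
      ≤ #{U : Finset L | ∑ j ∈ U, D j ∈ Set.Ico (a - ∑ j ∈ R, D j) (a - ∑ j ∈ R, D j + δ)} := by
        refine card_le_card_of_injOn (fun S => S.subtype (· ∈ L)) (fun S hS => ?_) ?_
        · simp only [coe_filter, mem_filter, mem_univ, true_and, Set.mem_ofPred_eq,
            Set.mem_Ico] at hS ⊢
          have := sum_split S hS.2
          constructor <;> linarith [hS.1.1, hS.1.2]
        · intro S hS T hT hST
          simp only [coe_filter, mem_filter, mem_univ, true_and, Set.mem_ofPred_eq] at hS hT
          ext j
          by_cases hj : j ∈ L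
          · simpa using Finset.ext_iff.mp hST ⟨j, hj⟩
          · simpa [hj] using Finset.ext_iff.mp (hS.2.trans hT.2.symm) j
    _ ≤ (#L).choose (#L / 2) := by
        rw [← Fintype.card_coe L]
        exact card_sum_mem_Ico_le_choose hδ (fun j : L => (mem_filter_univ (j : ι)).mp j.2) _

lemma littlewood_offord {g : ℝ} (hg : 0 < g) (hgD : g ≤ #{j | δ ≤ D j}) (a : ℝ) :
    unifProb (fun S : Finset ι => ∑ j ∈ S, D j ∈ Set.Ico a (a + δ)) ≤ 1 / √g := by
  rcases le_or_gt δ 0 with hδ | hδ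
  · simp [unifProb, Set.Ico_eq_empty (show ¬ a < a + δ by linarith)]
  set L : Finset ι := {j | δ ≤ D j}
  have hcount := card_sum_mem_Ico_le_choose_mul_two_pow (D := D) hδ a
  rw [unifProb_eq_card_div, Fintype.card_finset, Nat.cast_pow,
    Nat.cast_ofNat, div_le_iff₀ (by positivity)]
  calc _ ≤ ((#L).choose (#L / 2) * 2 ^ (Fintype.card ι - #L) : ℝ) := by
        norm_cast
        convert hcount
    _ ≤ 2 ^ #L / √g * 2 ^ (Fintype.card ι - #L) := by
        gcongr
        exact choose_half_le_two_pow_div_sqrt _ hg hgD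
    _ = 1 / √g * 2 ^ Fintype.card ι := by
        rw [div_mul_eq_mul_div, ← pow_add, Nat.add_sub_cancel' (card_le_univ L), one_div_mul_eq_div]

end LittlewoodOfford

section Flips

variable {Ω ι : Type*} {X : Ω → ℝ} {D : ι → Ω → ℝ} {s : ι → Equiv.Perm Ω}

lemma exists_perm_forall_eq_add_sum (hX : ∀ j ω, X (s j ω) = X ω + D j ω)
    (hD : ∀ i j, i ≠ j → ∀ ω, D i (s j ω) = D i ω) (S : Finset ι) :
    ∃ π : Equiv.Perm Ω, ∀ ω, X (π ω) = X ω + ∑ j ∈ S, D j ω := by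
  induction S using Finset.induction_on with
  | empty => exact ⟨1, fun ω => by simp⟩
  | insert j S hj ih =>
    obtain ⟨π, hπ⟩ := ih
    have hunchanged : ∀ ω, ∑ i ∈ S, D i (s j ω) = ∑ i ∈ S, D i ω := fun ω =>
      sum_congr rfl fun i hi => hD i j (ne_of_mem_of_not_mem hi hj) ω
    exact ⟨π * s j, fun ω => by
      rw [Equiv.Perm.mul_apply, hπ, hX, hunchanged, sum_insert hj, add_assoc]⟩

/-- Performing a uniformly random set of the moves `s j` preserves the uniform law on `Ω`, and
shifts `X` by a random subset sum of the `D j ω`. -/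
lemma unifProb_mem_Ico_le_of_flips [Fintype Ω] [Nonempty Ω] [Fintype ι]
    (hX : ∀ j ω, X (s j ω) = X ω + D j ω) (hD : ∀ i j, i ≠ j → ∀ ω, D i (s j ω) = D i ω)
    {δ g : ℝ} (hg : 0 < g) (a : ℝ) :
    unifProb (fun ω => X ω ∈ Set.Ico a (a + δ)) ≤
      1 / √g + unifProb fun ω => (#{j | δ ≤ D j ω} : ℝ) < g := by
  choose π hπ using exists_perm_forall_eq_add_sum hX hD
  have hfiber : ∀ ω, unifProb (fun S => X (π S ω) ∈ Set.Ico a (a + δ)) ≤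
      1 / √g + if (#{j | δ ≤ D j ω} : ℝ) < g then 1 else 0 := by
    intro ω
    split_ifs with hfew
    · exact (unifProb_le_one _).trans (le_add_of_nonneg_left (by positivity))
    · have hshift : ∀ S, X (π S ω) ∈ Set.Ico a (a + δ) ↔
          ∑ j ∈ S, D j ω ∈ Set.Ico (a - X ω) (a - X ω + δ) := fun S => by
        rw [hπ, Set.mem_Ico, Set.mem_Ico]
        constructor <;> rintro ⟨hlo, hhi⟩ <;> constructor <;> linarith
      simpa only [hshift, add_zero] using littlewood_offord hg (not_lt.mp hfew) (a - X ω)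
  calc unifProb (fun ω => X ω ∈ Set.Ico a (a + δ))
      = 𝔼 S : Finset ι, unifProb fun ω => X (π S ω) ∈ Set.Ico a (a + δ) := by
        simp only [unifProb_comp_equiv (π _) fun ω => X ω ∈ Set.Ico a (a + δ),
          Fintype.expect_const]
    _ = 𝔼 ω, unifProb fun S => X (π S ω) ∈ Set.Ico a (a + δ) := expect_unifProb_comm _
    _ ≤ 𝔼 ω, (1 / √g + if (#{j | δ ≤ D j ω} : ℝ) < g then 1 else 0) :=
        expect_le_expect fun ω _ => hfiber ω
    _ = 1 / √g + unifProb fun ω => (#{j | δ ≤ D j ω} : ℝ) < g := by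
        rw [expect_add_distrib, Fintype.expect_const, unifProb]

end Flips

section DecomposeFin

open Equiv

variable {n : ℕ}

lemma expect_perm_succ (F : Perm (Fin (n + 1)) → ℝ) :
    𝔼 σ, F σ = 𝔼 p, 𝔼 e, F (Perm.decomposeFin.symm (p, e)) := by
  rw [← Fintype.expect_equiv Perm.decomposeFin.symm (fun pe => F (Perm.decomposeFin.symm pe)) F
    fun _ => rfl, ← univ_product_univ, expect_product]

lemma decomposeFin_symm_eq_swap_mul (p : Fin (n + 1)) (e : Perm (Fin n)) :
    Perm.decomposeFin.symm (p, e) = swap 0 p * Perm.decomposeFin.symm (0, e) := by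
  ext x
  cases x using Fin.cases <;> simp

lemma decomposeFin_symm_zero_swap_mul (x y : Fin n) (e : Perm (Fin n)) :
    Perm.decomposeFin.symm (0, swap x y * e) =
      swap x.succ y.succ * Perm.decomposeFin.symm (0, e) := by
  ext z
  cases z using Fin.cases with
  | zero =>
    simp [swap_apply_of_ne_of_ne (Fin.succ_ne_zero x).symm (Fin.succ_ne_zero y).symm]
  | succ z => simp [(Fin.succ_injective n).map_swap]

lemma exists_decomposeFin_symm_swap_mul (p : Fin (n + 1)) (x y : Fin n) :
    ∃ x' y', ∀ e : Perm (Fin n), Perm.decomposeFin.symm (p, swap x y * e) =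
      swap x' y' * Perm.decomposeFin.symm (p, e) :=
  ⟨swap 0 p x.succ, swap 0 p y.succ, fun e => by
    rw [decomposeFin_symm_eq_swap_mul p, decomposeFin_symm_zero_swap_mul, ← mul_assoc,
      mul_swap_eq_swap_mul, mul_assoc, ← decomposeFin_symm_eq_swap_mul]⟩

/-- The Efron–Stein argument: reveal `σ 0`, then induct on the permutation of the remaining
points. -/
lemma expect_sub_expect_sq_le_of_swap_lipschitz {c : ℝ} (F : Perm (Fin n) → ℝ)
    (hF : ∀ x y σ, |F (swap x y * σ) - F σ| ≤ c) :
    𝔼 σ, (F σ - 𝔼 σ', F σ') ^ 2 ≤ c ^ 2 * n := by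
  induction n with
  | zero => simp
  | succ n ih =>
    set Fp : Fin (n + 1) → Perm (Fin n) → ℝ := fun p e => F (Perm.decomposeFin.symm (p, e))
    have hvar : ∀ p, 𝔼 e, (Fp p e - 𝔼 e', Fp p e') ^ 2 ≤ c ^ 2 * n := fun p => ih _ fun x y e => by
      obtain ⟨x', y', hswap⟩ := exists_decomposeFin_symm_swap_mul p x y
      simp only [Fp, hswap, hF]
    have hmean : ∀ p, |𝔼 e, Fp p e - 𝔼 e, Fp 0 e| ≤ c := fun p => by
      rw [← expect_sub_distrib]
      refine (abs_expect_le _ _).trans (expect_le univ_nonempty fun e _ => ?_)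
      simp only [Fp, decomposeFin_symm_eq_swap_mul p, hF]
    calc 𝔼 σ, (F σ - 𝔼 σ', F σ') ^ 2
        ≤ 𝔼 σ, (F σ - 𝔼 e, Fp 0 e) ^ 2 := by
          rw [expect_sub_sq_eq_variance_add F (𝔼 e, Fp 0 e)]
          exact le_add_of_nonneg_right (sq_nonneg _)
      _ = 𝔼 p, (𝔼 e, (Fp p e - 𝔼 e', Fp p e') ^ 2 + (𝔼 e, Fp p e - 𝔼 e, Fp 0 e) ^ 2) := by
          rw [expect_perm_succ]
          exact expect_congr rfl fun p _ => expect_sub_sq_eq_variance_add (Fp p) _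
      _ ≤ c ^ 2 * n + c ^ 2 := by
          refine expect_le univ_nonempty fun p _ => add_le_add (hvar p) ?_
          exact sq_le_sq' (abs_le.mp (hmean p)).1 (abs_le.mp (hmean p)).2
      _ = c ^ 2 * ↑(n + 1) := by push_cast; ring

end DecomposeFin

section FullCycles

open Equiv

lemma hammingDist_swap_mul_le_two {α : Type*} [Fintype α] [DecidableEq α] (x y : α)
    (σ : Perm α) : hammingDist (swap x y * σ) σ ≤ 2 := by
  refine (card_le_card (t := {σ⁻¹ x, σ⁻¹ y}) fun i hi => ?_).trans card_le_two
  by_contra hne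
  simp only [mem_insert, mem_singleton, Perm.eq_inv_iff_eq, not_or] at hne
  exact (mem_filter.mp hi).2 (swap_apply_of_ne_of_ne hne.1 hne.2)

lemma isConj_of_isCycleOn_univ {α : Type*} [Finite α] {c c' : Perm α}
    (hc : c.IsCycleOn Set.univ) (hc' : c'.IsCycleOn Set.univ) : IsConj c c' := by
  have := Fintype.ofFinite α
  cases subsingleton_or_nontrivial α
  · exact Subsingleton.elim c c' ▸ IsConj.refl c
  have isCycle_and_support_eq : ∀ {f : Perm α}, f.IsCycleOn Set.univ →
      f.IsCycle ∧ f.support = univ := fun {f} hf =>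
    have hmoves : ∀ x, f x ≠ x := fun x => hf.apply_ne Set.nontrivial_univ (Set.mem_univ x)
    ⟨Perm.isCycle_iff_exists_isCycleOn.mpr ⟨_, Set.nontrivial_univ, hf, by simp⟩,
      eq_univ_of_forall fun x => Perm.mem_support.mpr (hmoves x)⟩
  obtain ⟨hcycle, hsupp⟩ := isCycle_and_support_eq hc
  obtain ⟨hcycle', hsupp'⟩ := isCycle_and_support_eq hc'
  exact hcycle.isConj hcycle' (by rw [hsupp, hsupp'])

lemma isCycleOn_univ_finRotate : ∀ n, (finRotate n).IsCycleOn Set.univ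
  | 0 | 1 => Perm.isCycleOn_of_subsingleton _ _
  | n + 2 => by
    convert (isCycle_finRotate (n := n)).isCycleOn
    refine (Set.eq_univ_of_forall fun x => ?_).symm
    exact Perm.mem_support.mp (support_finRotate ▸ mem_univ x)

variable {n : ℕ}

lemma isCycleOn_univ_decomposeFin_symm {c : Perm (Fin n)} (hc : c.IsCycleOn Set.univ)
    {p : Fin (n + 1)} (hp : p ≠ 0) :
    (Perm.decomposeFin.symm (p, c)).IsCycleOn Set.univ := by
  set d := Perm.decomposeFin.symm (p, c) with hd
  have hzero : d.SameCycle 0 p := ⟨1, by simp [hd]⟩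
  have hstep : ∀ x : Fin n, d.SameCycle x.succ (c x).succ := fun x => by
    have hdx : d.SameCycle x.succ (swap 0 p (c x).succ) := ⟨1, by simp [hd]⟩
    by_cases hx : (c x).succ = p
    · rw [hx, swap_apply_right] at hdx
      exact hx ▸ hdx.trans hzero
    · rwa [swap_apply_of_ne_of_ne (Fin.succ_ne_zero _) hx] at hdx
  have hpow : ∀ (k : ℕ) (x : Fin n), d.SameCycle x.succ ((c ^ k) x).succ := fun k x => by
    induction k with
    | zero => exact Perm.SameCycle.rfl
    | succ k ih =>
      rw [pow_succ', Perm.mul_apply]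
      exact ih.trans (hstep _)
  obtain ⟨z, rfl⟩ := Fin.exists_succ_eq.mpr hp
  have hreach : ∀ y, d.SameCycle 0 y := fun y => by
    cases y using Fin.cases with
    | zero => exact Perm.SameCycle.rfl
    | succ y =>
      obtain ⟨k, -, hk⟩ := (hc.2 (Set.mem_univ z) (Set.mem_univ y)).exists_pow_eq'
      exact hzero.trans (hk ▸ hpow k z)
  exact ⟨Set.bijOn_univ.mpr d.bijective, fun x _ y _ => (hreach x).symm.trans (hreach y)⟩

lemma hammingDist_decomposeFin_symm (p : Fin (n + 1)) (c e : Perm (Fin n)) :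
    hammingDist (Perm.decomposeFin.symm (p, c)) (Perm.decomposeFin.symm (p, e)) =
      hammingDist c e := by
  simp only [hammingDist, card_filter, Fin.sum_univ_succ]
  simp

/-- The number of values of `σ` that have to be changed to turn it into an `n`-cycle. -/
noncomputable def cycleDist (σ : Perm (Fin n)) : ℕ :=
  ⨅ c : {c : Perm (Fin n) // c.IsCycleOn Set.univ}, hammingDist (c : Perm (Fin n)) σ

lemma cycleDist_le {c : Perm (Fin n)} (hc : c.IsCycleOn Set.univ) (σ : Perm (Fin n)) :
    cycleDist σ ≤ hammingDist c σ :=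
  ciInf_le (OrderBot.bddBelow _) (⟨c, hc⟩ : {c : Perm (Fin n) // c.IsCycleOn Set.univ})

lemma exists_hammingDist_eq_cycleDist (σ : Perm (Fin n)) :
    ∃ c : Perm (Fin n), c.IsCycleOn Set.univ ∧ hammingDist c σ = cycleDist σ := by
  have : Nonempty {c : Perm (Fin n) // c.IsCycleOn Set.univ} := ⟨_, isCycleOn_univ_finRotate n⟩
  obtain ⟨⟨c, hc⟩, h⟩ := exists_eq_ciInf_of_finite
    (f := fun c : {c : Perm (Fin n) // c.IsCycleOn Set.univ} => hammingDist (c : Perm (Fin n)) σ)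
  exact ⟨c, hc, h⟩

lemma cycleDist_decomposeFin_symm_le (p : Fin (n + 2)) (e : Perm (Fin (n + 1))) :
    cycleDist (Perm.decomposeFin.symm (p, e)) ≤ cycleDist e + if p = 0 then 2 else 0 := by
  obtain ⟨c, hc, hce⟩ := exists_hammingDist_eq_cycleDist e
  rw [← hce]
  split_ifs with hp
  · subst hp
    calc cycleDist (Perm.decomposeFin.symm (0, e))
        ≤ hammingDist (Perm.decomposeFin.symm (1, c)) (Perm.decomposeFin.symm (0, e)) :=
          cycleDist_le (isCycleOn_univ_decomposeFin_symm hc one_ne_zero) _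
      _ ≤ hammingDist (Perm.decomposeFin.symm (1, c)) (Perm.decomposeFin.symm (0, c)) +
            hammingDist (Perm.decomposeFin.symm (0, c)) (Perm.decomposeFin.symm (0, e)) :=
          hammingDist_triangle _ _ _
      _ ≤ 2 + hammingDist c e := by
          rw [hammingDist_decomposeFin_symm, decomposeFin_symm_eq_swap_mul 1 c]
          exact Nat.add_le_add_right (hammingDist_swap_mul_le_two _ _ _) _
      _ = hammingDist c e + 2 := add_comm _ _
  · exact (cycleDist_le (isCycleOn_univ_decomposeFin_symm hc hp) _).trans_eq
      (hammingDist_decomposeFin_symm p c e)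

lemma expect_cycleDist_le (n : ℕ) :
    𝔼 σ : Perm (Fin (n + 1)), (cycleDist σ : ℝ) ≤ 2 * (harmonic (n + 1) - 1) := by
  induction n with
  | zero =>
    have hzero : ∀ σ : Perm (Fin 1), cycleDist σ = 0 := fun σ =>
      Nat.le_zero.mp <| (cycleDist_le (Perm.isCycleOn_of_subsingleton σ _) σ).trans_eq
        (hammingDist_self _)
    simp [hzero, harmonic_succ]
  | succ n ih =>
    have hstep : ∀ (p : Fin (n + 2)) (e : Perm (Fin (n + 1))),
        (cycleDist (Perm.decomposeFin.symm (p, e)) : ℝ) ≤ cycleDist e + if p = 0 then 2 else 0 :=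
      fun p e => mod_cast cycleDist_decomposeFin_symm_le p e
    calc 𝔼 σ : Perm (Fin (n + 2)), (cycleDist σ : ℝ)
        = 𝔼 p, 𝔼 e, (cycleDist (Perm.decomposeFin.symm (p, e)) : ℝ) := expect_perm_succ _
      _ ≤ 𝔼 p, 𝔼 e, ((cycleDist e : ℝ) + if p = 0 then 2 else 0) :=
          expect_le_expect fun p _ => expect_le_expect fun e _ => hstep p e
      _ = 𝔼 e : Perm (Fin (n + 1)), (cycleDist e : ℝ) + 2 / ↑(n + 2) := by
          simp only [expect_add_distrib, Fintype.expect_const]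
          rw [Fintype.expect_eq_sum_div_card (ι := Fin (n + 2)), sum_ite_eq',
            if_pos (mem_univ _), Fintype.card_fin]
      _ ≤ 2 * (harmonic (n + 2) - 1) := by
          rw [harmonic_succ (n + 1), Rat.cast_add, Rat.cast_inv, Rat.cast_natCast, div_eq_mul_inv]
          linarith

lemma expect_cycleDist_le_two_mul_log (hn : n ≠ 0) :
    𝔼 σ : Perm (Fin n), (cycleDist σ : ℝ) ≤ 2 * Real.log n := by
  obtain ⟨m, rfl⟩ := Nat.exists_eq_succ_of_ne_zero hn
  linarith [expect_cycleDist_le m, harmonic_le_one_add_log (m + 1)]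

end FullCycles

section PrescribedValues

open Equiv

variable {ι κ α β : Type*} [Fintype α]

lemma card_filter_comp_le_add_hammingDist [Fintype ι] [DecidableEq β] {x : ι → κ → α}
    (hx : Function.Injective2 x) (p : ι → (κ → β) → Prop) (f g : α → β) :
    #{j | p j (f ∘ x j)} ≤ #{j | p j (g ∘ x j)} + hammingDist f g := by
  have hsub : ({j | p j (f ∘ x j)} : Finset ι) ⊆
      ({j | p j (g ∘ x j)} : Finset ι) ∪ ({j | ∃ k, f (x j k) ≠ g (x j k)} : Finset ι) := by
    intro j hj
    simp only [mem_union, mem_filter, mem_univ, true_and] at hj ⊢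
    by_cases hne : ∃ k, f (x j k) ≠ g (x j k)
    · exact Or.inr hne
    · push Not at hne
      have hcomp : f ∘ x j = g ∘ x j := funext hne
      exact Or.inl (hcomp ▸ hj)
  have hchanged : #{j | ∃ k, f (x j k) ≠ g (x j k)} ≤ hammingDist f g := by
    refine card_le_card_of_forall_subsingleton (fun j i => ∃ k, x j k = i) (fun j hj => ?_) ?_
    · obtain ⟨k, hk⟩ := (mem_filter.mp hj).2
      exact ⟨x j k, by simpa using hk, k, rfl⟩
    · rintro i - j ⟨-, k, rfl⟩ j' ⟨-, k', hk'⟩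
      exact (hx hk').1.symm
  exact (card_le_card hsub).trans ((card_union_le _ _).trans (Nat.add_le_add_left hchanged _))

lemma unifProb_mem_eq_sum (f : α → β) (s : Finset β) :
    unifProb (fun a => f a ∈ s) = ∑ b ∈ s, unifProb fun a => f a = b := by
  simp only [unifProb, ← expect_sum_comm, sum_ite_eq]
  congr!

variable [DecidableEq α] {m : ℕ} {x : Fin m → α}

lemma unifProb_comp_eq_of_injective (x : Fin m → α) {g g' : Fin m → α}
    (hg : Function.Injective g) (hg' : Function.Injective g') :
    (unifProb fun τ : Perm α => τ ∘ x = g) = unifProb fun τ : Perm α => τ ∘ x = g' := by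
  have := Perm.isMultiplyPretransitive α m
  obtain ⟨π, hπ⟩ := MulAction.exists_smul_eq (Perm α) (⟨g, hg⟩ : Fin m ↪ α) ⟨g', hg'⟩
  have hπg : π ∘ g = g' := congrArg DFunLike.coe hπ
  rw [← unifProb_comp_equiv (Equiv.mulLeft π) fun τ : Perm α => τ ∘ x = g']
  refine congrArg unifProb (funext fun τ => propext ?_)
  rw [← hπg, Equiv.coe_mulLeft, Perm.coe_mul, Function.comp_assoc, π.injective.comp_left.eq_iff]

lemma one_le_card_pow_mul_unifProb_comp_eq (hx : Function.Injective x) {g : Fin m → α}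
    (hg : Function.Injective g) :
    1 ≤ Fintype.card α ^ m * unifProb fun τ : Perm α => τ ∘ x = g := by
  calc (1 : ℝ) = unifProb fun τ : Perm α => τ ∘ x ∈ (univ : Finset (Fin m → α)) := by
        simp only [mem_univ, unifProb_true]
    _ = ∑ f : Fin m → α, unifProb fun τ : Perm α => τ ∘ x = f :=
        unifProb_mem_eq_sum (fun τ : Perm α => τ ∘ x) univ
    _ ≤ ∑ _f : Fin m → α, unifProb fun τ : Perm α => τ ∘ x = g := by
        refine sum_le_sum fun f _ => ?_
        by_cases hf : Function.Injective f
        · exact (unifProb_comp_eq_of_injective x hf hg).le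
        · have hne : ∀ τ : Perm α, τ ∘ x ≠ f := fun τ hτ => hf (hτ ▸ τ.injective.comp hx)
          simpa only [unifProb, hne, if_false, expect_const_zero] using unifProb_nonneg _
    _ = Fintype.card α ^ m * unifProb fun τ : Perm α => τ ∘ x = g := by simp

lemma prod_card_le_card_pow_mul_unifProb (hx : Function.Injective x) {W : Fin m → Finset α}
    (hW : Pairwise (Function.onFun Disjoint W)) :
    ∏ k, (#(W k) : ℝ) ≤ Fintype.card α ^ m * unifProb fun τ : Perm α => ∀ k, τ (x k) ∈ W k := by
  have hinj : ∀ g ∈ Fintype.piFinset W, Function.Injective g := fun g hg k k' hkk' => by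
    by_contra hne
    rw [Fintype.mem_piFinset] at hg
    exact disjoint_left.mp (hW hne) (hg k) (hkk' ▸ hg k')
  calc ∏ k, (#(W k) : ℝ) = ∑ _g ∈ Fintype.piFinset W, (1 : ℝ) := by simp
    _ ≤ ∑ g ∈ Fintype.piFinset W,
          Fintype.card α ^ m * unifProb fun τ : Perm α => τ ∘ x = g :=
        sum_le_sum fun g hg => one_le_card_pow_mul_unifProb_comp_eq hx (hinj g hg)
    _ = Fintype.card α ^ m * unifProb fun τ : Perm α => ∀ k, τ (x k) ∈ W k := by
        rw [← mul_sum, ← unifProb_mem_eq_sum (fun τ : Perm α => τ ∘ x)]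
        simp only [Fintype.mem_piFinset, Function.comp_apply]

end PrescribedValues

section ConjSum

open Equiv

variable {α : Type*}

/-- The change of `conjSum w σ τ` (defined below) when the values of `τ` at the two middle points
of a path `x 0 → x 1 → x 2 → x 3` of `σ` are exchanged. -/
def swapGain (w : α → α → ℝ) (x : Fin 4 → α) (τ : Perm α) : ℝ :=
  w (τ (x 0)) (τ (x 2)) - w (τ (x 0)) (τ (x 1)) + w (τ (x 1)) (τ (x 3)) - w (τ (x 2)) (τ (x 3))

lemma swapGain_mul_swap [DecidableEq α] (w : α → α → ℝ) {x : Fin 4 → α} {y z : α}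
    (hy : ∀ k, x k ≠ y) (hz : ∀ k, x k ≠ z) (τ : Perm α) :
    swapGain w x (τ * swap y z) = swapGain w x τ := by
  simp only [swapGain, Perm.mul_apply, swap_apply_of_ne_of_ne (hy _) (hz _)]

variable [Fintype α]

/-- The total `w`-weight of the edges `i → σ i`, relabelled by `τ`. For
`w x y = |y - x| ^ q` it is `rhoq q (τ * σ * τ⁻¹)`. -/
def conjSum (w : α → α → ℝ) (σ τ : Perm α) : ℝ :=
  ∑ i, w (τ i) (τ (σ i))

lemma conjSum_conj (w : α → α → ℝ) (π σ τ : Perm α) :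
    conjSum w (π * σ * π⁻¹) τ = conjSum w σ (τ * π) := by
  rw [conjSum, ← Equiv.sum_comp π]
  simp only [conjSum, Perm.mul_apply, Perm.inv_def, symm_apply_apply]

lemma abs_conjSum_sub_le [DecidableEq α] {w : α → α → ℝ} {M : ℝ} (hw0 : ∀ x y, 0 ≤ w x y)
    (hwM : ∀ x y, w x y ≤ M) (σ σ' τ : Perm α) :
    |conjSum w σ τ - conjSum w σ' τ| ≤ hammingDist σ σ' * M := by
  have hterm : ∀ i, |w (τ i) (τ (σ i)) - w (τ i) (τ (σ' i))| ≤ if σ i ≠ σ' i then M else 0 :=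
    fun i => by
      split_ifs with h
      · rw [abs_le]
        constructor <;> linarith [hw0 (τ i) (τ (σ i)), hw0 (τ i) (τ (σ' i)),
          hwM (τ i) (τ (σ i)), hwM (τ i) (τ (σ' i))]
      · rw [not_not.mp h, sub_self, abs_zero]
  calc |conjSum w σ τ - conjSum w σ' τ|
      = |∑ i, (w (τ i) (τ (σ i)) - w (τ i) (τ (σ' i)))| := by
        rw [conjSum, conjSum, sum_sub_distrib]
    _ ≤ ∑ i, if σ i ≠ σ' i then M else 0 :=
        (abs_sum_le_sum_abs _ _).trans (sum_le_sum fun i _ => hterm i)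
    _ = hammingDist σ σ' * M := by
        rw [← sum_filter, sum_const, nsmul_eq_mul, hammingDist]

lemma conjSum_mul_swap [DecidableEq α] {w : α → α → ℝ} (hw : ∀ y z, w y z = w z y)
    {x : Fin 4 → α} (hx : Function.Injective x) {σ : Perm α}
    (hσ : ∀ k : Fin 3, σ (x k.castSucc) = x k.succ) (τ : Perm α) :
    conjSum w σ (τ * swap (x 1) (x 2)) = conjSum w σ τ + swapGain w x τ := by
  have hσ0 : σ (x 0) = x 1 := hσ 0
  have hσ1 : σ (x 1) = x 2 := hσ 1
  have hσ2 : σ (x 2) = x 3 := hσ 2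
  have hne : ∀ k l, k ≠ l → x k ≠ x l := fun k l h => hx.ne h
  have hfix : ∀ i, i ≠ x 1 → i ≠ x 2 → (τ * swap (x 1) (x 2)) i = τ i := fun i h₁ h₂ => by
    rw [Perm.mul_apply, swap_apply_of_ne_of_ne h₁ h₂]
  have hleft : (τ * swap (x 1) (x 2)) (x 1) = τ (x 2) := by simp
  have hright : (τ * swap (x 1) (x 2)) (x 2) = τ (x 1) := by simp
  have hunchanged : ∀ i ∈ univ, i ∉ ({x 0, x 1, x 2} : Finset α) →
      w ((τ * swap (x 1) (x 2)) i) ((τ * swap (x 1) (x 2)) (σ i)) - w (τ i) (τ (σ i)) = 0 := by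
    intro i _ hi
    simp only [mem_insert, mem_singleton, not_or] at hi
    rw [hfix i hi.2.1 hi.2.2, hfix (σ i) (hσ0 ▸ σ.injective.ne hi.1)
      (hσ1 ▸ σ.injective.ne hi.2.1), sub_self]
  rw [← sub_eq_iff_eq_add', conjSum, conjSum, ← sum_sub_distrib,
    ← sum_subset (subset_univ _) hunchanged, sum_insert (by simp [hne]),
    sum_insert (by simp [hne]), sum_singleton, hσ0, hσ1, hσ2, hleft, hright,
    hfix (x 0) (hne _ _ (by decide)) (hne _ _ (by decide)),
    hfix (x 3) (hne _ _ (by decide)) (hne _ _ (by decide)), hw (τ (x 2)) (τ (x 1)), swapGain]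
  ring

/-- Disjoint paths of `σ` can be flipped independently of each other. -/
lemma unifProb_conjSum_mem_Ico_le [DecidableEq α] {ι : Type*} [Fintype ι] {w : α → α → ℝ}
    (hw : ∀ y z, w y z = w z y) {x : ι → Fin 4 → α} (hx : Function.Injective2 x) {σ : Perm α}
    (hσ : ∀ j (k : Fin 3), σ (x j k.castSucc) = x j k.succ) {δ g : ℝ} (hg : 0 < g) (a : ℝ) :
    unifProb (fun τ => conjSum w σ τ ∈ Set.Ico a (a + δ)) ≤
      1 / √g + unifProb fun τ => (#{j | δ ≤ swapGain w (x j) τ} : ℝ) < g :=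
  unifProb_mem_Ico_le_of_flips (s := fun j => Equiv.mulRight (swap (x j 1) (x j 2)))
    (fun j τ => conjSum_mul_swap hw (hx.right j) (hσ j) τ)
    (fun _ _ hij τ => swapGain_mul_swap w (fun _ h => hij (hx h).1) (fun _ h => hij (hx h).1) τ)
    hg a

end ConjSum

section Spearman

open Equiv

variable {n : ℕ} {q : ℝ}

/-- The weight `|y - x| ^ q` of the edge `x → y`, of which Spearman's metric is the total. -/
noncomputable def spearmanWeight (q : ℝ) (x y : Fin n) : ℝ :=
  |(y : ℝ) - x| ^ q

lemma rhoq_conj_eq_conjSum (q : ℝ) (σ τ : Perm (Fin n)) :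
    rhoq q (τ * σ * τ⁻¹) = conjSum (spearmanWeight q) σ τ := by
  rw [rhoq, ← Equiv.sum_comp τ]
  simp only [conjSum, spearmanWeight, Perm.mul_apply, Perm.inv_def, symm_apply_apply]

lemma spearmanWeight_comm (q : ℝ) (x y : Fin n) : spearmanWeight q x y = spearmanWeight q y x := by
  rw [spearmanWeight, spearmanWeight, abs_sub_comm]

lemma spearmanWeight_nonneg (q : ℝ) (x y : Fin n) : 0 ≤ spearmanWeight q x y :=
  Real.rpow_nonneg (abs_nonneg _) q

lemma spearmanWeight_le_of_abs_le (hq : 0 ≤ q) {x y : Fin n} {r : ℝ} (h : |(y : ℝ) - x| ≤ r * n)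
    (hr : 0 ≤ r) : spearmanWeight q x y ≤ r ^ q * (n : ℝ) ^ q := by
  rw [← Real.mul_rpow hr n.cast_nonneg]
  exact Real.rpow_le_rpow (abs_nonneg _) h hq

lemma le_spearmanWeight_of_le (hq : 0 ≤ q) {x y : Fin n} {r : ℝ} (hr : 0 ≤ r)
    (h : r * n ≤ (y : ℝ) - x) : r ^ q * (n : ℝ) ^ q ≤ spearmanWeight q x y := by
  rw [← Real.mul_rpow hr n.cast_nonneg]
  exact Real.rpow_le_rpow (by positivity) (h.trans (le_abs_self _)) hq

lemma spearmanWeight_le (hq : 0 ≤ q) (x y : Fin n) : spearmanWeight q x y ≤ (n : ℝ) ^ q := by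
  have hx : (x : ℝ) ≤ n := mod_cast x.2.le
  have hy : (y : ℝ) ≤ n := mod_cast y.2.le
  have h : |(y : ℝ) - x| ≤ 1 * n := abs_le.mpr
    ⟨by linarith [(y : ℕ).cast_nonneg (α := ℝ)], by linarith [(x : ℕ).cast_nonneg (α := ℝ)]⟩
  simpa using spearmanWeight_le_of_abs_le hq h zero_le_one

/-- The `j`-th of the `⌊n / 4⌋` disjoint paths `4j → 4j + 1 → 4j + 2 → 4j + 3` of `finRotate n`. -/
def block (j : Fin (n / 4)) (k : Fin 4) : Fin n :=
  ⟨4 * j + k, by omega⟩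

lemma injective2_block : Function.Injective2 (block (n := n)) := by
  intro j j' k k' h
  simp only [block, Fin.mk.injEq] at h
  exact ⟨Fin.ext (by omega), Fin.ext (by omega)⟩

lemma finRotate_block (j : Fin (n / 4)) (k : Fin 3) :
    finRotate n (block j k.castSucc) = block j k.succ := by
  obtain ⟨m, rfl⟩ : ∃ m, n = m + 1 := Nat.exists_eq_succ_of_ne_zero (by have := j.2; omega)
  have hlt : 4 * (j : ℕ) + k < m := by omega
  exact (finRotate_of_lt hlt).trans (Fin.ext (by simp [block, add_assoc]))

/-- The `k`-th interval of length `⌊n / 8⌋` in `Fin n`; for `n < 8` the length is `0`, and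
`v / 0 = 0` makes it degenerate. -/
def octile (n k : ℕ) : Finset (Fin n) :=
  {v | (v : ℕ) / (n / 8) = k}

lemma disjoint_octile {k l : ℕ} (h : k ≠ l) : Disjoint (octile n k) (octile n l) :=
  disjoint_filter.mpr fun _ _ hk hl => h (hk.symm.trans hl)

lemma le_card_octile {k : ℕ} (hk : k < 8) : n / 8 ≤ #(octile n k) := by
  have hmem : ∀ i : Fin (n / 8), n / 8 * k + i < n := fun i => by
    nlinarith [i.2, Nat.div_mul_le_self n 8]
  rw [← Fintype.card_fin (n / 8), ← card_univ]
  refine card_le_card_of_injOn (fun i => ⟨n / 8 * k + i, hmem i⟩) (fun i _ => ?_) ?_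
  · simp only [octile, coe_filter, mem_univ, true_and, Set.mem_ofPred_eq]
    rw [Nat.mul_add_div i.pos, Nat.div_eq_of_lt i.2, add_zero]
  · intro i _ i' _ h
    simpa [Fin.ext_iff] using h

/-- The octiles in which the values on a block are prescribed: the first two points of the block
go to the far left and the last two to the far right, so that exchanging the middle points
replaces two short edges by two long ones. -/
def spreadWindow (n : ℕ) (k : Fin 4) : Finset (Fin n) :=
  octile n (![0, 1, 6, 7] k)

/-- Lower bound for the gain of a spread block on the scale `n ^ q`. -/
noncomputable def spreadGain (q : ℝ) : ℝ :=
  2 * ((5 / 16) ^ q - (1 / 4) ^ q)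

lemma spreadGain_pos (hq : 0 < q) : 0 < spreadGain q :=
  mul_pos two_pos (sub_pos.mpr (Real.rpow_lt_rpow (by norm_num) (by norm_num) hq))

lemma bounds_of_mem_octile (hn : 8 ≤ n) {k : ℕ} {v : Fin n} (hv : v ∈ octile n k) :
    n / 8 * k ≤ v ∧ v < n / 8 * (k + 1) := by
  obtain rfl := (mem_filter_univ v).mp hv
  exact ⟨Nat.mul_div_le _ _, Nat.lt_mul_div_succ _ (by omega)⟩

lemma le_swapGain_of_forall_mem_spreadWindow (hq : 0 ≤ q) (hn : 8 ≤ n) {x : Fin 4 → Fin n}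
    {τ : Perm (Fin n)} (hτ : ∀ k, τ (x k) ∈ spreadWindow n k) :
    spreadGain q * (n : ℝ) ^ q ≤ swapGain (spearmanWeight q) x τ := by
  have h0 := bounds_of_mem_octile hn (hτ 0)
  have h1 := bounds_of_mem_octile hn (hτ 1)
  have h2 := bounds_of_mem_octile hn (hτ 2)
  have h3 := bounds_of_mem_octile hn (hτ 3)
  simp only [Matrix.cons_val] at h0 h1 h2 h3
  have hlong : ∀ y z : Fin n, (y : ℕ) + 5 * (n / 8) ≤ z →
      (5 / 16) ^ q * (n : ℝ) ^ q ≤ spearmanWeight q y z := fun y z h => by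
    refine le_spearmanWeight_of_le hq (by norm_num) ?_
    have : (16 * y + 5 * n : ℝ) ≤ 16 * z := mod_cast (by omega : 16 * (y : ℕ) + 5 * n ≤ 16 * z)
    linarith
  have hshort : ∀ y z : Fin n, (y : ℕ) ≤ z + 2 * (n / 8) → (z : ℕ) ≤ y + 2 * (n / 8) →
      spearmanWeight q y z ≤ (1 / 4) ^ q * (n : ℝ) ^ q := fun y z h h' => by
    refine spearmanWeight_le_of_abs_le hq ?_ (by norm_num)
    have : (4 * y : ℝ) ≤ 4 * z + n := mod_cast (by omega : 4 * (y : ℕ) ≤ 4 * z + n)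
    have : (4 * z : ℝ) ≤ 4 * y + n := mod_cast (by omega : 4 * (z : ℕ) ≤ 4 * y + n)
    exact abs_le.mpr ⟨by linarith, by linarith⟩
  have h02 := hlong (τ (x 0)) (τ (x 2)) (by omega)
  have h13 := hlong (τ (x 1)) (τ (x 3)) (by omega)
  have h01 := hshort (τ (x 0)) (τ (x 1)) (by omega) (by omega)
  have h23 := hshort (τ (x 2)) (τ (x 3)) (by omega) (by omega)
  rw [spreadGain, swapGain]
  linarith

lemma inv_sixteen_pow_le_unifProb_spread (hn : 8 ≤ n) {x : Fin 4 → Fin n}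
    (hx : Function.Injective x) :
    (1 / 16) ^ 4 ≤ unifProb fun τ : Perm (Fin n) => ∀ k, τ (x k) ∈ spreadWindow n k := by
  have hindex : Function.Injective ![0, 1, 6, 7] := by decide
  have hcard : ∀ k, (n / 16 : ℝ) ≤ #(spreadWindow n k) := fun k => by
    have hk : n / 8 ≤ #(spreadWindow n k) := le_card_octile (by fin_cases k <;> decide)
    rw [div_le_iff₀ (by norm_num)]
    exact_mod_cast (by omega : n ≤ #(spreadWindow n k) * 16)
  have hprod := prod_card_le_card_pow_mul_unifProb hx (W := spreadWindow n)
    fun k l hkl => disjoint_octile (hindex.ne hkl)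
  rw [Fintype.card_fin] at hprod
  refine le_of_mul_le_mul_left ?_ (by positivity : (0 : ℝ) < n ^ 4)
  calc (n : ℝ) ^ 4 * (1 / 16) ^ 4 = ∏ _k : Fin 4, (n / 16 : ℝ) := by
        rw [prod_const, card_univ, Fintype.card_fin, ← mul_pow, mul_one_div]
    _ ≤ ∏ k, (#(spreadWindow n k) : ℝ) :=
        prod_le_prod (fun _ _ => by positivity) fun k _ => hcard k
    _ ≤ _ := hprod

/-- The number of blocks whose values lie in the prescribed octiles. -/
noncomputable def spreadCount (τ : Perm (Fin n)) : ℕ :=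
  #{j : Fin (n / 4) | ∀ k, τ (block j k) ∈ spreadWindow n k}

lemma le_expect_spreadCount (hn : 8 ≤ n) :
    (n : ℝ) / 2 ^ 19 ≤ 𝔼 τ : Perm (Fin n), (spreadCount τ : ℝ) := by
  have hblocks : (n / 8 : ℝ) ≤ (n / 4 : ℕ) := by
    rw [div_le_iff₀ (by norm_num)]
    exact_mod_cast (by omega : n ≤ n / 4 * 8)
  calc (n : ℝ) / 2 ^ 19 = n / 8 * (1 / 16) ^ 4 := by ring
    _ ≤ ((n / 4 : ℕ) : ℝ) * (1 / 16) ^ 4 := by gcongr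
    _ = ∑ _j : Fin (n / 4), (1 / 16 : ℝ) ^ 4 := by simp
    _ ≤ ∑ j : Fin (n / 4), unifProb fun τ : Perm (Fin n) => ∀ k, τ (block j k) ∈ spreadWindow n k :=
        sum_le_sum fun j _ => inv_sixteen_pow_le_unifProb_spread hn (injective2_block.right j)
    _ = 𝔼 τ : Perm (Fin n), (spreadCount τ : ℝ) := by
        simp only [← expect_card_filter, spreadCount]
        congr!

lemma spreadCount_le_add_hammingDist (σ τ : Perm (Fin n)) :
    spreadCount σ ≤ spreadCount τ + hammingDist σ τ := by
  rw [spreadCount, spreadCount]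
  convert card_filter_comp_le_add_hammingDist injective2_block
    (fun (_ : Fin (n / 4)) g => ∀ k, g k ∈ spreadWindow n k) σ τ <;> rfl

lemma abs_spreadCount_swap_mul_sub_le (x y : Fin n) (τ : Perm (Fin n)) :
    |(spreadCount (swap x y * τ) : ℝ) - spreadCount τ| ≤ 2 := by
  have hdist := hammingDist_swap_mul_le_two x y τ
  have hle := spreadCount_le_add_hammingDist (swap x y * τ) τ
  have hge := spreadCount_le_add_hammingDist τ (swap x y * τ)
  rw [hammingDist_comm] at hge
  rw [abs_sub_le_iff, sub_le_iff_le_add, sub_le_iff_le_add]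
  constructor <;> norm_cast <;> omega

lemma unifProb_spreadCount_lt_le (hn : 8 ≤ n) :
    (unifProb fun τ : Perm (Fin n) => (spreadCount τ : ℝ) < n / 2 ^ 20) ≤ 2 ^ 42 / n := by
  have : (0 : ℝ) < n := by positivity
  have hmean := le_expect_spreadCount hn
  set m := 𝔼 τ : Perm (Fin n), (spreadCount τ : ℝ)
  calc (unifProb fun τ : Perm (Fin n) => (spreadCount τ : ℝ) < n / 2 ^ 20)
      ≤ unifProb fun τ : Perm (Fin n) => (spreadCount τ : ℝ) < m - n / 2 ^ 20 :=
        unifProb_mono fun τ hτ => by linarith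
    _ ≤ (𝔼 τ : Perm (Fin n), (spreadCount τ - m) ^ 2) / (n / 2 ^ 20) ^ 2 :=
        unifProb_lt_sub_le_expect_sq_div _ m (by positivity)
    _ ≤ 2 ^ 2 * n / (n / 2 ^ 20) ^ 2 := by
        gcongr
        exact expect_sub_expect_sq_le_of_swap_lipschitz _ abs_spreadCount_swap_mul_sub_le
    _ = 2 ^ 42 / n := by field_simp

lemma unifProb_conjSum_finRotate_mem_Ico_le (hq : 0 ≤ q) (hn : n ≠ 0) (a : ℝ) :
    (unifProb fun τ => conjSum (spearmanWeight q) (finRotate n) τ ∈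
      Set.Ico a (a + spreadGain q * (n : ℝ) ^ q)) ≤ 2 ^ 43 / √n := by
  have hn0 : (0 : ℝ) < n := by positivity
  rcases lt_or_ge n 8 with hsmall | hn8
  · refine (unifProb_le_one _).trans ((one_le_div (by positivity)).mpr ?_)
    exact (Real.sqrt_le_left (by norm_num)).mpr ((Nat.cast_le.mpr hsmall.le).trans (by norm_num))
  have hfew : (unifProb fun τ : Perm (Fin n) =>
      (#{j : Fin (n / 4) | spreadGain q * (n : ℝ) ^ q ≤
        swapGain (spearmanWeight q) (block j) τ} : ℝ) < n / 2 ^ 20) ≤ 2 ^ 42 / n := by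
    refine (unifProb_mono fun τ hτ => ?_).trans (unifProb_spreadCount_lt_le hn8)
    refine lt_of_le_of_lt (Nat.cast_le.mpr (card_le_card fun j hj => ?_)) hτ
    rw [mem_filter_univ] at hj ⊢
    exact le_swapGain_of_forall_mem_spreadWindow hq hn8 hj
  have hsqrt : √n ≤ n :=
    (Real.sqrt_le_left hn0.le).mpr (le_self_pow₀ (mod_cast Nat.pos_of_ne_zero hn) two_ne_zero)
  have hscale : 1 / √(n / 2 ^ 20) = 2 ^ 10 / √n := by
    rw [Real.sqrt_div hn0.le, one_div_div, show (2 : ℝ) ^ 20 = (2 ^ 10) ^ 2 by norm_num,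
      Real.sqrt_sq (by norm_num)]
  calc _ ≤ 1 / √(n / 2 ^ 20) + 2 ^ 42 / n :=
        (unifProb_conjSum_mem_Ico_le (spearmanWeight_comm q) injective2_block finRotate_block
          (by positivity) a).trans (add_le_add_right hfew _)
    _ ≤ 2 ^ 10 / √n + 2 ^ 42 / √n := by
        rw [hscale]
        gcongr
    _ ≤ 2 ^ 43 / √n := by
        rw [← add_div]
        gcongr
        norm_num

lemma unifProb_abs_conjSum_finRotate_sub_le (hq : 0 < q) (hn : n ≠ 0) (a : ℝ) (d : ℕ) :
    (unifProb fun τ => |conjSum (spearmanWeight q) (finRotate n) τ - a| ≤ d * (n : ℝ) ^ q) ≤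
      (2 * d / spreadGain q + 1) * (2 ^ 43 / √n) := by
  have hgain := spreadGain_pos hq
  have hnq : (0 : ℝ) < (n : ℝ) ^ q := by positivity
  have h := unifProb_abs_sub_le_of_forall_mem_Ico_le (mul_pos hgain hnq)
    (unifProb_conjSum_finRotate_mem_Ico_le hq.le hn) a (r := d * (n : ℝ) ^ q) (by positivity)
  rwa [← mul_assoc, mul_div_mul_right _ _ hnq.ne'] at h

lemma abs_unifProb_rhoq_conj_le_sub_le (hq : 0 < q) (hn : n ≠ 0) (a : ℝ) (σ : Perm (Fin n)) :
    |(unifProb fun τ => rhoq q (τ * σ * τ⁻¹) ≤ a) -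
        unifProb fun τ => conjSum (spearmanWeight q) (finRotate n) τ ≤ a| ≤
      (2 * cycleDist σ / spreadGain q + 1) * (2 ^ 43 / √n) := by
  obtain ⟨c, hc, hdist⟩ := exists_hammingDist_eq_cycleDist σ
  obtain ⟨π, rfl⟩ := isConj_iff.mp (isConj_of_isCycleOn_univ (isCycleOn_univ_finRotate n) hc)
  have hclose : ∀ τ, |conjSum (spearmanWeight q) σ τ -
      conjSum (spearmanWeight q) (finRotate n) (τ * π)| ≤ cycleDist σ * (n : ℝ) ^ q := fun τ => by
    rw [← conjSum_conj, ← hdist, hammingDist_comm]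
    exact abs_conjSum_sub_le (spearmanWeight_nonneg q) (spearmanWeight_le hq.le) _ _ τ
  have hshift : ∀ p : ℝ → Prop,
      (unifProb fun τ => p (conjSum (spearmanWeight q) (finRotate n) (τ * π))) =
        unifProb fun τ => p (conjSum (spearmanWeight q) (finRotate n) τ) := fun p =>
    unifProb_comp_equiv (Equiv.mulRight π) fun τ => p (conjSum (spearmanWeight q) (finRotate n) τ)
  have h := abs_unifProb_le_sub_unifProb_le hclose a
  rw [hshift (· ≤ a), hshift fun x => |x - a| ≤ cycleDist σ * (n : ℝ) ^ q] at h
  simp only [rhoq_conj_eq_conjSum]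
  exact h.trans (unifProb_abs_conjSum_finRotate_sub_le hq hn a (cycleDist σ))

lemma two_mul_expect_conj_error_le (hq : 0 < q) (hn : 2 ≤ n) :
    2 * 𝔼 σ : Perm (Fin n), (2 * cycleDist σ / spreadGain q + 1) * (2 ^ 43 / √n) ≤
      2 ^ 44 * (4 / spreadGain q + 1 / Real.log 2) * Real.log n / √n := by
  have hgain := spreadGain_pos hq
  have hlog : 1 ≤ Real.log n / Real.log 2 :=
    (one_le_div (Real.log_pos one_lt_two)).mpr (Real.log_le_log two_pos (mod_cast hn))
  have hmean := expect_cycleDist_le_two_mul_log (n := n) (by omega)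
  calc 2 * 𝔼 σ : Perm (Fin n), (2 * cycleDist σ / spreadGain q + 1) * (2 ^ 43 / √n)
      = 2 * ((2 * (𝔼 σ : Perm (Fin n), (cycleDist σ : ℝ)) / spreadGain q + 1) *
          (2 ^ 43 / √n)) := by
        rw [← expect_mul, expect_add_distrib, ← expect_div, ← mul_expect,
          expect_const univ_nonempty]
    _ ≤ 2 * ((2 * (2 * Real.log n) / spreadGain q + Real.log n / Real.log 2) *
          (2 ^ 43 / √n)) := by
        gcongr
    _ = 2 ^ 44 * (4 / spreadGain q + 1 / Real.log 2) * Real.log n / √n := by ring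

end Spearman

theorem rhoqBar_asymp_indep_classFun_general {q : ℝ} (hq : 0 < q) :
    ∃ C : ℝ, ∀ n : ℕ, 2 ≤ n → ∀ A : Equiv.Perm (Fin n) → Prop,
      (∀ τ σ, A (τ * σ * τ⁻¹) ↔ A σ) → ∀ a : ℝ,
        |Pn (fun σ : Equiv.Perm (Fin n) => rhoqBar q σ ≤ a ∧ A σ) -
          Pn (fun σ : Equiv.Perm (Fin n) => rhoqBar q σ ≤ a) * Pn A| ≤ C * Real.log n / √n := by
  refine ⟨2 ^ 44 * (4 / spreadGain q + 1 / Real.log 2), fun n hn A hA a => ?_⟩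
  have hmono : Monotone fun x => (x - En fun τ : Equiv.Perm (Fin n) => rhoq q τ) /
      √(VarN fun τ : Equiv.Perm (Fin n) => rhoq q τ) := fun x y hxy => by
    dsimp only
    gcongr
  obtain ⟨b, hb⟩ := exists_forall_comp_le_iff_le (rhoq (n := n) q) hmono a
  have hbar : ∀ σ : Equiv.Perm (Fin n), rhoqBar q σ ≤ a ↔ rhoq q σ ≤ b := hb
  simp only [Pn_eq_unifProb, hbar]
  exact (abs_unifProb_and_sub_unifProb_mul_unifProb_le (B := (rhoq q · ≤ b)) hA
    (abs_unifProb_rhoq_conj_le_sub_le hq (by omega) b)).trans (two_mul_expect_conj_error_le hq hn)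

/-- Any weakly convergent sequence of class functions is asymptotically independent of
the normalized Spearman metric `ρ̄_q`, at rate `log n / √n`. -/
theorem rhoqBar_asymp_indep_classFun (q : ℝ) (hq : 1 ≤ q)
    (f : ∀ n : ℕ, Equiv.Perm (Fin n) → ℝ)
    (hclass : ∀ n : ℕ, ∀ a σ : Equiv.Perm (Fin n), f n (a * σ * a⁻¹) = f n σ)
    (hweak : ∃ μ : MeasureTheory.Measure ℝ, MeasureTheory.IsProbabilityMeasure μ ∧
      ∀ g : ℝ → ℝ, Continuous g → (∃ C : ℝ, ∀ x, |g x| ≤ C) →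
        Tendsto (fun n : ℕ => En (fun σ => g (f n σ))) atTop (nhds (∫ x, g x ∂μ))) :
    ∃ C : ℝ, ∀ n : ℕ, 2 ≤ n → ∀ a b : ℝ,
      |Pn (fun σ : Equiv.Perm (Fin n) => rhoqBar q σ ≤ a ∧ f n σ ≤ b) -
        Pn (fun σ : Equiv.Perm (Fin n) => rhoqBar q σ ≤ a) *
          Pn (fun σ : Equiv.Perm (Fin n) => f n σ ≤ b)| ≤
        C * Real.log n / Real.sqrt n := by
  obtain ⟨C, hC⟩ := rhoqBar_asymp_indep_classFun_general (q := q) (by linarith)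
  exact ⟨C, fun n hn a b => hC n hn (f n · ≤ b) (fun τ σ => by rw [hclass]) a⟩
end

section
/- Let f_n : S_n → ℝ be a sequence of class functions whose distributions under P_n converge weakly. Then there is a constant C such that for all n ≥ 2, sup_{a,b ∈ ℝ} |P_n[τ̄(σ) ≤ a, f_n(σ) ≤ b] − P_n[τ̄(σ) ≤ a]·P_n[f_n(σ) ≤ b]| ≤ C (log n)/n^{1/2}, where τ̄ is the normalized Kendall's tau. -/
open scoped BigOperators Classical
open Finset Filter

/-- Kendall's tau: the number of inversions `#{(i,j) : i < j, σ(i) > σ(j)}`. -/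
noncomputable def kendallTau {n : ℕ} (σ : Equiv.Perm (Fin n)) : ℕ :=
  (Finset.univ.filter (fun p : Fin n × Fin n => p.1 < p.2 ∧ σ p.2 < σ p.1)).card

/-- Normalized Kendall's tau `τ̄ = (τ − E τ)/√(Var τ)`. -/
noncomputable def kendallTauBar {n : ℕ} (σ : Equiv.Perm (Fin n)) : ℝ :=
  ((kendallTau σ : ℝ) - En (fun σ : Equiv.Perm (Fin n) => (kendallTau σ : ℝ))) /
    Real.sqrt (VarN (fun σ : Equiv.Perm (Fin n) => (kendallTau σ : ℝ)))

/-!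
Fix a conjugation-invariant event `B`. Conditioning on the conjugacy class, `τ` fails to be
independent of `B` only as far as its law on a random conjugate of `σ` depends on the class of `σ`.

Building `σ` one point at a time and never closing a cycle early produces an `n`-cycle at expected
Hamming distance at most `2 (1/2 + ⋯ + 1/n) ≤ 2 log n` from a uniformly random `σ`. Hence any two
classes can be coupled, through the class of `n`-cycles, by conjugates which are close in Hamming
distance, and altering a permutation at `d` points alters `τ` by at most `2nd`.

It remains to see that `τ` lies in a given window of length `n` with probability `O(1/√n)`. The
generating function of `τ` is the `q`-factorial `∏ₖ (1 + q + ⋯ + q^(k-1))`, which is divisible by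
`∏ₕ (1 + q^h)` over `n/4 < h ≤ n/2`; so `τ` has the law of a sum with about `n/4` independent fair
summands in `{0, h}`, and the Littlewood–Offord bound applies.
-/

section LittlewoodOfford

theorem card_filter_sum_mem_Ico_le_choose {α : Type*} [Fintype α] {w : α → ℕ} {δ : ℕ}
    (hw : ∀ i, δ ≤ w i) (t : ℕ) :
    #{S : Finset α | ∑ i ∈ S, w i ∈ Ico t (t + δ)} ≤
      (Fintype.card α).choose (Fintype.card α / 2) := by
  refine IsAntichain.sperner fun S hS T hT hne hST => ?_
  simp only [coe_filter, mem_univ, true_and, mem_Ico, Set.mem_ofPred_eq] at hS hT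
  obtain ⟨x, hxT, hxS⟩ := exists_of_ssubset (hST.ssubset_of_ne hne)
  have hsum : w x + ∑ i ∈ S, w i ≤ ∑ i ∈ T, w i := by
    rw [← sum_insert hxS]
    exact sum_le_sum_of_subset (insert_subset hxT hST)
  have := hw x
  omega

theorem two_mul_add_one_mul_centralBinom_sq_le (k : ℕ) :
    (2 * k + 1) * k.centralBinom ^ 2 ≤ 16 ^ k := by
  induction k with
  | zero => simp
  | succ k ih =>
    refine Nat.le_of_mul_le_mul_left ?_ (pow_pos k.succ_pos 2)
    calc (k + 1) ^ 2 * ((2 * (k + 1) + 1) * (k + 1).centralBinom ^ 2)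
        = (2 * k + 3) * ((k + 1) * (k + 1).centralBinom) ^ 2 := by ring
      _ = 4 * (2 * k + 3) * (2 * k + 1) * ((2 * k + 1) * k.centralBinom ^ 2) := by
          rw [Nat.succ_mul_centralBinom_succ]; ring
      _ ≤ 16 * (k + 1) ^ 2 * 16 ^ k := Nat.mul_le_mul (by nlinarith) ih
      _ = (k + 1) ^ 2 * 16 ^ (k + 1) := by ring

theorem centralBinom_succ_eq_two_mul_choose (k : ℕ) :
    (k + 1).centralBinom = 2 * (2 * k + 1).choose k := by
  rw [Nat.centralBinom_eq_two_mul_choose, mul_add_one, Nat.choose_succ_succ,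
    ← Nat.choose_symm_half, ← two_mul]

theorem succ_mul_choose_half_sq_le (m : ℕ) : (m + 1) * m.choose (m / 2) ^ 2 ≤ 4 ^ m := by
  obtain ⟨k, rfl | rfl⟩ := m.even_or_odd'
  · rw [Nat.mul_div_cancel_left k two_pos, ← Nat.centralBinom_eq_two_mul_choose, pow_mul]
    exact two_mul_add_one_mul_centralBinom_sq_le k
  · have hk := two_mul_add_one_mul_centralBinom_sq_le (k + 1)
    have hpow : (16 : ℕ) ^ (k + 1) = 4 * 4 ^ (2 * k + 1) := by
      rw [show (16 : ℕ) = 4 ^ 2 by norm_num, ← pow_mul, ← pow_succ']; ring_nf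
    rw [centralBinom_succ_eq_two_mul_choose, hpow] at hk
    rw [show (2 * k + 1) / 2 = k by omega]
    nlinarith

theorem sqrt_succ_mul_choose_half_le (m : ℕ) :
    √((m : ℝ) + 1) * m.choose (m / 2) ≤ 2 ^ m := by
  refine le_of_sq_le_sq ?_ (by positivity)
  rw [mul_pow, Real.sq_sqrt (by positivity), ← pow_mul, mul_comm m 2, pow_mul]
  exact_mod_cast succ_mul_choose_half_sq_le m

end LittlewoodOfford

section CoefficientWindows

open Polynomial

theorem sum_coeff_sum_X_pow {ι : Type*} (s : Finset ι) (w : ι → ℕ) (I : Finset ℕ) :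
    ∑ i ∈ I, (∑ x ∈ s, X ^ w x : ℕ[X]).coeff i = #{x ∈ s | w x ∈ I} := by
  simp only [finsetSum_coeff, coeff_X_pow]
  rw [sum_comm, card_filter]
  simp

theorem sum_coeff_mul_monomial_le (p : ℕ[X]) (k a t δ : ℕ) :
    ∑ i ∈ Ico t (t + δ), (p * monomial k a).coeff i ≤
      (∑ i ∈ Ico (t - k) (t - k + δ), p.coeff i) * a := by
  have hinj : Set.InjOn (· - k) (↑{i ∈ Ico t (t + δ) | k ≤ i} : Set ℕ) := by
    intro i hi j hj hij
    simp only [coe_filter, Set.mem_ofPred_eq] at hi hj hij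
    omega
  have hsub : image (· - k) {i ∈ Ico t (t + δ) | k ≤ i} ⊆ Ico (t - k) (t - k + δ) := by
    intro j hj
    simp only [mem_image, mem_filter, mem_Ico] at hj ⊢
    omega
  simp only [← C_mul_X_pow_eq_monomial, ← mul_assoc, coeff_mul_X_pow', coeff_mul_C, ← sum_filter,
    ← sum_mul]
  rw [← sum_image hinj]
  exact Nat.mul_le_mul_right a (sum_le_sum_of_subset hsub)

theorem sum_coeff_mul_le {p : ℕ[X]} {c δ : ℕ}
    (hp : ∀ t, ∑ i ∈ Ico t (t + δ), p.coeff i ≤ c) (q : ℕ[X]) (t : ℕ) :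
    ∑ i ∈ Ico t (t + δ), (p * q).coeff i ≤ c * q.eval 1 := by
  induction q using Polynomial.induction_on' with
  | add q r hq hr =>
    simp only [mul_add, coeff_add, sum_add_distrib, eval_add]
    exact add_le_add hq hr
  | monomial k a =>
    simpa using (sum_coeff_mul_monomial_le p k a t δ).trans (Nat.mul_le_mul_right a (hp _))

end CoefficientWindows

section UniformProbability

variable {α β : Type*} [Fintype α] [Fintype β]

/-- The probability of `p` under the uniform distribution on a finite type, generalizing `Pn` from
symmetric groups. -/
noncomputable def uniformProb (p : α → Prop) : ℝ :=
  𝔼 a, if p a then 1 else 0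

theorem uniformProb_eq_card_div (p : α → Prop) [DecidablePred p] :
    uniformProb p = (#{a | p a} : ℝ) / Fintype.card α := by
  rw [uniformProb, Fintype.expect_eq_sum_div_card, card_filter, Nat.cast_sum]
  congr! 2 with a
  split_ifs <;> simp

theorem Pn_eq_uniformProb {n : ℕ} (p : Equiv.Perm (Fin n) → Prop) : Pn p = uniformProb p :=
  (uniformProb_eq_card_div p).symm

theorem uniformProb_nonneg (p : α → Prop) : 0 ≤ uniformProb p :=
  expect_nonneg fun _ _ => ite_nonneg zero_le_one le_rfl

theorem uniformProb_mono {p q : α → Prop} (h : ∀ a, p a → q a) :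
    uniformProb p ≤ uniformProb q :=
  expect_le_expect fun a _ => by
    by_cases hp : p a
    · simp [hp, h a hp]
    · simpa [hp] using ite_nonneg zero_le_one le_rfl

theorem uniformProb_or_le (p q : α → Prop) :
    uniformProb (fun a => p a ∨ q a) ≤ uniformProb p + uniformProb q := by
  simp only [uniformProb, ← expect_add_distrib]
  refine expect_le_expect fun a _ => ?_
  by_cases hp : p a <;> by_cases hq : q a <;> simp [hp, hq]

theorem uniformProb_comp_equiv (e : α ≃ β) (p : β → Prop) :
    uniformProb (fun a => p (e a)) = uniformProb p :=
  Fintype.expect_equiv e _ _ fun _ => rfl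

theorem expect_uniformProb_comm (p : α → β → Prop) :
    𝔼 a, uniformProb (p a) = 𝔼 b, uniformProb fun a => p a b :=
  expect_comm _ _ _

theorem uniformProb_mem_Ico_mul_le {T : α → ℕ} {δ : ℕ} {c : ℝ}
    (hT : ∀ t, uniformProb (fun a => T a ∈ Ico t (t + δ)) ≤ c) (k t : ℕ) :
    uniformProb (fun a => T a ∈ Ico t (t + k * δ)) ≤ k * c := by
  induction k with
  | zero => simp [uniformProb]
  | succ k ih =>
    calc uniformProb (fun a => T a ∈ Ico t (t + (k + 1) * δ))
        ≤ uniformProb (fun a => T a ∈ Ico t (t + k * δ) ∨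
            T a ∈ Ico (t + k * δ) (t + k * δ + δ)) := by
          refine uniformProb_mono fun a ha => ?_
          rw [add_one_mul] at ha
          simp only [mem_Ico] at ha ⊢
          omega
      _ ≤ k * c + c := (uniformProb_or_le _ _).trans (add_le_add ih (hT _))
      _ = (k + 1 : ℕ) * c := by push_cast; ring

theorem abs_uniformProb_lt_sub_le {T T' : α → ℕ} {w : ℕ}
    (h : ∀ a, Nat.dist (T a) (T' a) ≤ w) (t : ℕ) :
    |uniformProb (fun a => T a < t) - uniformProb (fun a => T' a < t)| ≤
      uniformProb fun a => T' a ∈ Ico (t - w) (t + w) := by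
  simp only [uniformProb, ← expect_sub_distrib]
  refine (abs_expect_le _ _).trans (expect_le_expect fun a _ => ?_)
  have hcross : (T a < t ↔ T' a < t) ∨ T' a ∈ Ico (t - w) (t + w) := by
    have := h a
    simp only [Nat.dist, mem_Ico] at this ⊢
    omega
  obtain heq | hmem := hcross
  · simp only [heq]
    split_ifs <;> norm_num
  · rw [if_pos hmem]
    split_ifs <;> norm_num

end UniformProbability

section InversionGeneratingFunction

variable {n : ℕ}

/-- The permutation of `Fin (n + 1)` whose one-line notation is `p` followed by that of `σ`, with
the values `≥ p` of `σ` shifted up by one. Every permutation arises exactly once, and the leading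
`p` creates exactly `p` new inversions. -/
def consPerm (p : Fin (n + 1)) (σ : Equiv.Perm (Fin n)) : Equiv.Perm (Fin (n + 1)) :=
  p.cycleRange.symm * Equiv.Perm.decomposeFin.symm (0, σ)

theorem consPerm_zero (p : Fin (n + 1)) (σ : Equiv.Perm (Fin n)) : consPerm p σ 0 = p := by
  simp [consPerm]

theorem consPerm_succ (p : Fin (n + 1)) (σ : Equiv.Perm (Fin n)) (i : Fin n) :
    consPerm p σ i.succ = p.succAbove (σ i) := by
  simp [consPerm]

theorem bijective_consPerm :
    Function.Bijective fun x : Fin (n + 1) × Equiv.Perm (Fin n) => consPerm x.1 x.2 := by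
  rw [Fintype.bijective_iff_injective_and_card]
  refine ⟨?_, by simp [Fintype.card_perm, Nat.factorial_succ]⟩
  rintro ⟨p, σ⟩ ⟨q, ρ⟩ (h : consPerm p σ = consPerm q ρ)
  obtain rfl : p = q := by simpa only [consPerm_zero] using DFunLike.congr_fun h 0
  obtain rfl : σ = ρ := by simpa [consPerm] using h
  rfl

theorem card_filter_succAbove_lt (p : Fin (n + 1)) (σ : Equiv.Perm (Fin n)) :
    #{j | p.succAbove (σ j) < p} = p := by
  calc #{j | p.succAbove (σ j) < p} = #{j | p.succAbove j < p} := by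
        simpa only [card_filter] using Equiv.sum_comp σ fun j => if p.succAbove j < p then 1 else 0
    _ = #{j : Fin n | (j : ℕ) < p} := by
        simp only [Fin.succAbove_lt_iff_castSucc_lt]; rfl
    _ = p := by rw [Fin.card_filter_val_lt, min_eq_right (Nat.le_of_lt_succ p.2)]

theorem kendallTau_eq_sum_ite (σ : Equiv.Perm (Fin n)) :
    kendallTau σ = ∑ i, ∑ j, if i < j ∧ σ j < σ i then 1 else 0 := by
  rw [kendallTau, card_filter, Fintype.sum_prod_type]

theorem kendallTau_consPerm (p : Fin (n + 1)) (σ : Equiv.Perm (Fin n)) :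
    kendallTau (consPerm p σ) = p + kendallTau σ := by
  simp only [kendallTau_eq_sum_ite, Fin.sum_univ_succ, consPerm_zero, consPerm_succ,
    Fin.succ_lt_succ_iff, (Fin.strictMono_succAbove p).lt_iff_lt]
  simp [card_filter_succAbove_lt]

theorem sum_pow_kendallTau {R : Type*} [CommSemiring R] (x : R) (n : ℕ) :
    ∑ σ : Equiv.Perm (Fin n), x ^ kendallTau σ = ∏ k ∈ Icc 1 n, ∑ i ∈ range k, x ^ i := by
  induction n with
  | zero => simp [kendallTau]
  | succ n ih =>
    rw [← (Equiv.ofBijective _ bijective_consPerm).sum_comp, Fintype.sum_prod_type]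
    simp only [Equiv.ofBijective_apply, kendallTau_consPerm, pow_add, ← mul_sum, ← sum_mul]
    rw [ih, Fin.sum_univ_eq_sum_range (x ^ ·), prod_Icc_succ_top n.succ_pos, mul_comm]

theorem geom_sum_two_mul {R : Type*} [CommSemiring R] (x : R) (h : ℕ) :
    ∑ i ∈ range (2 * h), x ^ i = (1 + x ^ h) * ∑ i ∈ range h, x ^ i := by
  simp only [two_mul, sum_range_add, pow_add, ← mul_sum, add_mul, one_mul]

theorem prod_one_add_pow_dvd_prod_geom_sum {R : Type*} [CommSemiring R] (x : R) {n : ℕ}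
    {F : Finset ℕ} (hF : F ⊆ Icc 1 (n / 2)) :
    ∏ h ∈ F, (1 + x ^ h) ∣ ∏ k ∈ Icc 1 n, ∑ i ∈ range k, x ^ i := by
  have hdouble : image (2 * ·) F ⊆ Icc 1 n := by
    intro k hk
    obtain ⟨h, hh, rfl⟩ := mem_image.1 hk
    have := mem_Icc.1 (hF hh)
    simp only [mem_Icc]
    omega
  rw [← prod_sdiff hdouble, prod_image (mul_right_injective₀ two_ne_zero).injOn]
  simp only [geom_sum_two_mul, prod_mul_distrib]
  exact (dvd_mul_right _ _).mul_left _

end InversionGeneratingFunction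

section AntiConcentration

open Polynomial

theorem card_filter_kendallTau_mem_Ico_mul_le {n δ : ℕ} {F : Finset ℕ} (hF : F ⊆ Icc 1 (n / 2))
    (hδ : ∀ h ∈ F, δ ≤ h) (t : ℕ) :
    #{σ : Equiv.Perm (Fin n) | kendallTau σ ∈ Ico t (t + δ)} * 2 ^ #F ≤
      (#F).choose (#F / 2) * n.factorial := by
  obtain ⟨q, hq⟩ := prod_one_add_pow_dvd_prod_geom_sum (X : ℕ[X]) hF
  rw [← sum_pow_kendallTau] at hq
  have hwindow (s : ℕ) :
      ∑ i ∈ Ico s (s + δ), (∏ h ∈ F, (1 + X ^ h) : ℕ[X]).coeff i ≤ (#F).choose (#F / 2) := by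
    rw [← prod_coe_sort, prod_one_add]
    simp only [powerset_univ, prod_pow_eq_pow_sum, sum_coeff_sum_X_pow]
    simpa only [Fintype.card_coe] using
      card_filter_sum_mem_Ico_le_choose (w := fun h : F => (h : ℕ)) (fun h => hδ h h.2) s
  have heval : n.factorial = 2 ^ #F * q.eval 1 := by
    simpa [eval_finsetSum, eval_prod, Fintype.card_perm, one_add_one_eq_two] using
      congrArg (eval 1) hq
  rw [← sum_coeff_sum_X_pow, hq, heval]
  calc _ ≤ (#F).choose (#F / 2) * q.eval 1 * 2 ^ #F :=
        Nat.mul_le_mul_right _ (sum_coeff_mul_le hwindow q t)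
    _ = _ := by ring

theorem uniformProb_kendallTau_mem_Ico_quarter_le {n : ℕ} (hn : 0 < n) (t : ℕ) :
    uniformProb (fun σ : Equiv.Perm (Fin n) => kendallTau σ ∈ Ico t (t + (n / 4 + 1))) ≤
      2 / √n := by
  set F := Icc (n / 4 + 1) (n / 2)
  have hF : F ⊆ Icc 1 (n / 2) := Icc_subset_Icc_left (by omega)
  have hcard : (n : ℝ) ≤ 2 ^ 2 * ((#F : ℝ) + 1) := by
    have : n ≤ 2 ^ 2 * (#F + 1) := by simp only [F, Nat.card_Icc]; omega
    exact_mod_cast this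
  have hsqrt : √n ≤ 2 * √((#F : ℝ) + 1) := by
    simpa [Real.sqrt_mul] using Real.sqrt_le_sqrt hcard
  have hcount : (#{σ : Equiv.Perm (Fin n) | kendallTau σ ∈ Ico t (t + (n / 4 + 1))} : ℝ) * 2 ^ #F
      ≤ (#F).choose (#F / 2) * n.factorial := by
    exact_mod_cast card_filter_kendallTau_mem_Ico_mul_le hF (fun h hh => (mem_Icc.1 hh).1) t
  have hsqrt_pos : 0 < √(n : ℝ) := Real.sqrt_pos.2 (by exact_mod_cast hn)
  rw [uniformProb_eq_card_div, Fintype.card_perm, Fintype.card_fin,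
    div_le_div_iff₀ (by positivity) hsqrt_pos]
  refine le_of_mul_le_mul_right ?_ (show (0 : ℝ) < 2 ^ #F by positivity)
  calc _ = (#{σ : Equiv.Perm (Fin n) | kendallTau σ ∈ Ico t (t + (n / 4 + 1))} : ℝ) * 2 ^ #F * √n
        := by ring
    _ ≤ (#F).choose (#F / 2) * n.factorial * (2 * √((#F : ℝ) + 1)) := by gcongr
    _ = 2 * n.factorial * (√((#F : ℝ) + 1) * (#F).choose (#F / 2)) := by ring
    _ ≤ 2 * n.factorial * 2 ^ #F := by gcongr; exact sqrt_succ_mul_choose_half_le _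

theorem uniformProb_kendallTau_mem_Ico_le {n : ℕ} (hn : 0 < n) (t k : ℕ) :
    uniformProb (fun σ : Equiv.Perm (Fin n) => kendallTau σ ∈ Ico (t - k * n) (t + k * n)) ≤
      16 * k / √n := by
  have hlen : t + k * n ≤ t - k * n + 8 * k * (n / 4 + 1) := by
    have : k * n ≤ k * (4 * (n / 4 + 1)) := Nat.mul_le_mul_left k (by omega)
    rw [show 8 * k * (n / 4 + 1) = 2 * (k * (4 * (n / 4 + 1))) by ring]
    omega
  calc _ ≤ _ := uniformProb_mono fun σ hσ => Ico_subset_Ico_right hlen hσ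
    _ ≤ (8 * k : ℕ) * (2 / √n) :=
        uniformProb_mem_Ico_mul_le (uniformProb_kendallTau_mem_Ico_quarter_le hn) _ _
    _ = 16 * k / √n := by push_cast; ring

end AntiConcentration

section ConjugationAveraging

variable {G : Type*} [Group G] [Fintype G]

/-- The probability that a uniformly random conjugate of `σ` satisfies `p`, i.e. the conditional
probability of `p` given the conjugacy class of `σ`. -/
noncomputable def conjProb (p : G → Prop) (σ : G) : ℝ :=
  uniformProb fun π => p (π * σ * π⁻¹)

theorem conjProb_conj (p : G → Prop) (ρ σ : G) : conjProb p (ρ * σ * ρ⁻¹) = conjProb p σ := by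
  simpa [conjProb, mul_assoc] using
    uniformProb_comp_equiv (Equiv.mulRight ρ) fun π => p (π * σ * π⁻¹)

theorem expect_conjProb (p : G → Prop) : 𝔼 σ, conjProb p σ = uniformProb p := by
  have hconj (π : G) : uniformProb (fun σ => p (π * σ * π⁻¹)) = uniformProb p :=
    uniformProb_comp_equiv (MulAut.conj π).toEquiv p
  calc 𝔼 σ, conjProb p σ = 𝔼 π, uniformProb fun σ => p (π * σ * π⁻¹) :=
        expect_uniformProb_comm _
    _ = uniformProb p := by simp only [hconj, Fintype.expect_const]

theorem conjProb_and_of_conj_invariant {B : G → Prop} (hB : ∀ a σ, B (a * σ * a⁻¹) ↔ B σ)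
    (p : G → Prop) (σ : G) :
    conjProb (fun σ => p σ ∧ B σ) σ = (if B σ then 1 else 0) * conjProb p σ := by
  by_cases h : B σ <;> simp [conjProb, uniformProb, hB, h]

theorem abs_uniformProb_and_sub_mul_le {B : G → Prop} (hB : ∀ a σ, B (a * σ * a⁻¹) ↔ B σ)
    (p : G → Prop) :
    |uniformProb (fun σ => p σ ∧ B σ) - uniformProb p * uniformProb B| ≤
      𝔼 σ, 𝔼 σ', |conjProb p σ - conjProb p σ'| := by
  have hcov : uniformProb (fun σ => p σ ∧ B σ) - uniformProb p * uniformProb B =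
      𝔼 σ, (if B σ then 1 else 0) * 𝔼 σ', (conjProb p σ - conjProb p σ') := by
    simp only [expect_sub_distrib, expect_conjProb, Fintype.expect_const, mul_sub]
    rw [← expect_mul, ← uniformProb, mul_comm (uniformProb p), ← expect_conjProb]
    simp only [conjProb_and_of_conj_invariant hB]
  rw [hcov]
  refine (abs_expect_le _ _).trans (expect_le_expect fun σ _ => ?_)
  rw [abs_mul]
  refine (mul_le_of_le_one_left (abs_nonneg _) ?_).trans (abs_expect_le _ _)
  split_ifs <;> simp

variable {T : G → ℕ}

theorem abs_conjProb_lt_sub_le {σ σ' : G} {w : ℕ}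
    (h : ∃ ρ, ∀ π, Nat.dist (T (π * σ * π⁻¹)) (T (π * (ρ * σ' * ρ⁻¹) * π⁻¹)) ≤ w) (t : ℕ) :
    |conjProb (T · < t) σ - conjProb (T · < t) σ'| ≤
      conjProb (T · ∈ Ico (t - w) (t + w)) σ' := by
  obtain ⟨ρ, hρ⟩ := h
  rw [← conjProb_conj _ ρ σ', ← conjProb_conj _ ρ σ']
  exact abs_uniformProb_lt_sub_le hρ t

theorem conjProb_mem_Ico_mono {w w' : ℕ} (hw : w ≤ w') (t : ℕ) (σ : G) :
    conjProb (T · ∈ Ico (t - w) (t + w)) σ ≤ conjProb (T · ∈ Ico (t - w') (t + w')) σ :=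
  uniformProb_mono fun _ h => Ico_subset_Ico (by omega) (by omega) h

-- Taking the window around the element with the smaller `D` makes its width independent of that
-- element, so that averaging over it recovers the law of `T`.
theorem abs_conjProb_lt_sub_le_add {D : G → ℕ}
    (hD : ∀ σ σ', ∃ ρ, ∀ π,
      Nat.dist (T (π * σ * π⁻¹)) (T (π * (ρ * σ' * ρ⁻¹) * π⁻¹)) ≤ D σ + D σ')
    (t : ℕ) (σ σ' : G) :
    |conjProb (T · < t) σ - conjProb (T · < t) σ'| ≤
      conjProb (T · ∈ Ico (t - 2 * D σ) (t + 2 * D σ)) σ' +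
        conjProb (T · ∈ Ico (t - 2 * D σ') (t + 2 * D σ')) σ := by
  obtain h | h := le_total (D σ') (D σ)
  · calc _ ≤ _ := abs_conjProb_lt_sub_le (hD σ σ') t
      _ ≤ _ := conjProb_mem_Ico_mono (by omega) t σ'
      _ ≤ _ := le_add_of_nonneg_right (uniformProb_nonneg _)
  · rw [abs_sub_comm]
    calc _ ≤ _ := abs_conjProb_lt_sub_le (hD σ' σ) t
      _ ≤ _ := conjProb_mem_Ico_mono (by omega) t σ
      _ ≤ _ := le_add_of_nonneg_left (uniformProb_nonneg _)

theorem abs_uniformProb_lt_and_sub_mul_le {D : G → ℕ}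
    (hD : ∀ σ σ', ∃ ρ, ∀ π,
      Nat.dist (T (π * σ * π⁻¹)) (T (π * (ρ * σ' * ρ⁻¹) * π⁻¹)) ≤ D σ + D σ')
    {B : G → Prop} (hB : ∀ a σ, B (a * σ * a⁻¹) ↔ B σ) (t : ℕ) :
    |uniformProb (fun σ => T σ < t ∧ B σ) - uniformProb (T · < t) * uniformProb B| ≤
      2 * 𝔼 σ, uniformProb (T · ∈ Ico (t - 2 * D σ) (t + 2 * D σ)) := by
  calc _ ≤ 𝔼 σ, 𝔼 σ', |conjProb (T · < t) σ - conjProb (T · < t) σ'| :=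
        abs_uniformProb_and_sub_mul_le hB _
    _ ≤ 𝔼 σ, 𝔼 σ', (conjProb (T · ∈ Ico (t - 2 * D σ) (t + 2 * D σ)) σ' +
          conjProb (T · ∈ Ico (t - 2 * D σ') (t + 2 * D σ')) σ) :=
        expect_le_expect fun σ _ => expect_le_expect fun σ' _ =>
          abs_conjProb_lt_sub_le_add hD t σ σ'
    _ = 2 * 𝔼 σ, uniformProb (T · ∈ Ico (t - 2 * D σ) (t + 2 * D σ)) := by
        simp only [expect_add_distrib]
        rw [expect_comm _ _ fun σ σ' => conjProb (T · ∈ Ico (t - 2 * D σ') (t + 2 * D σ')) σ]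
        simp only [expect_conjProb, two_mul]

end ConjugationAveraging

section HammingDistance

variable {α : Type*} [Fintype α] [DecidableEq α]

theorem hammingDist_perm_mul_left (π σ ρ : Equiv.Perm α) :
    hammingDist ⇑(π * σ) ⇑(π * ρ) = hammingDist ⇑σ ⇑ρ :=
  hammingDist_comp (fun _ => π) fun _ => π.injective

theorem hammingDist_perm_mul_right (π σ ρ : Equiv.Perm α) :
    hammingDist ⇑(σ * π) ⇑(ρ * π) = hammingDist ⇑σ ⇑ρ := by
  simp only [hammingDist, card_filter]
  exact Equiv.sum_comp π fun i => if σ i ≠ ρ i then 1 else 0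

theorem hammingDist_perm_conj (π σ ρ : Equiv.Perm α) :
    hammingDist ⇑(π * σ * π⁻¹) ⇑(π * ρ * π⁻¹) = hammingDist ⇑σ ⇑ρ := by
  rw [hammingDist_perm_mul_right, hammingDist_perm_mul_left]

theorem hammingDist_swap_mul_le_two_s5 (i j : α) (σ : Equiv.Perm α) :
    hammingDist ⇑σ ⇑(Equiv.swap i j * σ) ≤ 2 := by
  calc hammingDist ⇑σ ⇑(Equiv.swap i j * σ)
      = hammingDist ⇑(1 : Equiv.Perm α) ⇑(Equiv.swap i j) := by
        simpa using hammingDist_perm_mul_right σ 1 (Equiv.swap i j)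
    _ ≤ #{i, j} := by
        refine card_le_card fun x hx => ?_
        have hmoved : x ≠ Equiv.swap i j x := (mem_filter.1 hx).2
        by_contra hij
        simp only [mem_insert, mem_singleton, not_or] at hij
        exact hmoved (Equiv.swap_apply_of_ne_of_ne hij.1 hij.2).symm
    _ ≤ 2 := card_le_two

theorem kendallTau_le_add_hammingDist {n : ℕ} (σ ρ : Equiv.Perm (Fin n)) :
    kendallTau σ ≤ kendallTau ρ + 2 * n * hammingDist ⇑σ ⇑ρ := by
  set moved : Finset (Fin n) := {i | σ i ≠ ρ i}
  have hsubset : ({p : Fin n × Fin n | p.1 < p.2 ∧ σ p.2 < σ p.1} : Finset _) ⊆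
      ({p : Fin n × Fin n | p.1 < p.2 ∧ ρ p.2 < ρ p.1} : Finset _) ∪
        (moved ×ˢ univ ∪ univ ×ˢ moved) := by
    rintro ⟨i, j⟩ hij
    by_cases hi : σ i = ρ i <;> by_cases hj : σ j = ρ j <;> simp_all [moved]
  calc kendallTau σ ≤ kendallTau ρ + (#(moved ×ˢ univ) + #(univ ×ˢ moved)) :=
        (card_le_card hsubset).trans <| (card_union_le _ _).trans <|
          Nat.add_le_add_left (card_union_le _ _) _
    _ = kendallTau ρ + 2 * n * hammingDist ⇑σ ⇑ρ := by
        simp only [card_product, card_univ, Fintype.card_fin, hammingDist, moved]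
        ring

theorem dist_kendallTau_le {n : ℕ} (σ ρ : Equiv.Perm (Fin n)) :
    Nat.dist (kendallTau σ) (kendallTau ρ) ≤ 2 * n * hammingDist ⇑σ ⇑ρ := by
  have hle := kendallTau_le_add_hammingDist σ ρ
  have hge := kendallTau_le_add_hammingDist ρ σ
  rw [hammingDist_comm] at hge
  simp only [Nat.dist]
  omega

end HammingDistance

section CycleCoupling

open Equiv.Perm (decomposeFin)

variable {n : ℕ}

theorem decomposeFin_symm_eq_swap_mul_s5 (p : Fin (n + 1)) (σ : Equiv.Perm (Fin n)) :
    decomposeFin.symm (p, σ) = Equiv.swap 0 p * decomposeFin.symm (0, σ) := by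
  ext i
  cases i using Fin.cases <;> simp

theorem decomposeFin_symm_zero_mul (σ ρ : Equiv.Perm (Fin n)) :
    decomposeFin.symm (0, σ * ρ) = decomposeFin.symm (0, σ) * decomposeFin.symm (0, ρ) := by
  ext i
  cases i using Fin.cases <;> simp

theorem hammingDist_decomposeFin_symm_s5 (p : Fin (n + 1)) (σ ρ : Equiv.Perm (Fin n)) :
    hammingDist ⇑(decomposeFin.symm (p, σ)) ⇑(decomposeFin.symm (p, ρ)) =
      hammingDist ⇑σ ⇑ρ := by
  simp [hammingDist, card_filter, Fin.sum_univ_succ]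

theorem exists_semiconjBy_finRotate_apply_zero {g : Equiv.Perm (Fin (n + 1))}
    (hg : IsConj (finRotate (n + 1)) g) (q : Fin (n + 1)) :
    ∃ π : Equiv.Perm (Fin (n + 1)), SemiconjBy π (finRotate (n + 1)) g ∧ π 0 = q := by
  obtain ⟨π, hπ⟩ := hg
  have hcomm : Commute (Equiv.addRight ((π : Equiv.Perm _)⁻¹ q)) (finRotate (n + 1)) := by
    ext i
    simp [add_right_comm]
  exact ⟨π * Equiv.addRight ((π : Equiv.Perm _)⁻¹ q), hπ.mul_left hcomm, by simp⟩

theorem isConj_finRotate_decomposeFin_symm {g : Equiv.Perm (Fin (n + 1))}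
    (hg : IsConj (finRotate (n + 1)) g) {p : Fin (n + 2)} (hp : p ≠ 0) :
    IsConj (finRotate (n + 2)) (decomposeFin.symm (p, g)) := by
  obtain ⟨q, rfl⟩ := Fin.exists_succ_eq.2 hp
  obtain ⟨π, hπ, hπ0⟩ := exists_semiconjBy_finRotate_apply_zero hg q
  set lift : Equiv.Perm (Fin (n + 2)) := decomposeFin.symm (0, π)
  have hswap : SemiconjBy lift (Equiv.swap 0 1) (Equiv.swap 0 q.succ) := by
    have h1 : lift 1 = q.succ := by
      rw [← Fin.succ_zero_eq_one, Equiv.Perm.decomposeFin_symm_apply_succ, hπ0, Equiv.swap_self,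
        Equiv.refl_apply]
    rw [SemiconjBy, Equiv.mul_swap_eq_swap_mul, h1]
    simp [lift]
  have hlift : SemiconjBy lift (decomposeFin.symm (0, finRotate (n + 1)))
      (decomposeFin.symm (0, g)) := by
    rw [SemiconjBy, ← decomposeFin_symm_zero_mul, ← decomposeFin_symm_zero_mul, hπ.eq]
  rw [finRotate_succ_eq_decomposeFin, decomposeFin_symm_eq_swap_mul_s5,
    decomposeFin_symm_eq_swap_mul_s5 q.succ]
  exact ⟨toUnits lift, hswap.mul_right hlift⟩

-- `p = 0` makes `0` a fixed point, while any other `p` inserts `0` into a cycle of `σ`; so only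
-- `p = 0` has to be modified to turn a full cycle into a full cycle.
theorem hammingDist_decomposeFin_symm_ite_le (p : Fin (n + 2)) (σ ρ : Equiv.Perm (Fin (n + 1))) :
    hammingDist ⇑(decomposeFin.symm (p, σ)) ⇑(decomposeFin.symm (if p = 0 then 1 else p, ρ)) ≤
      hammingDist ⇑σ ⇑ρ + if p = 0 then 2 else 0 := by
  split_ifs with hp
  · subst hp
    calc _ ≤ _ := hammingDist_triangle _ ⇑(decomposeFin.symm (0, ρ)) _
      _ ≤ _ := by
        rw [hammingDist_decomposeFin_symm_s5, decomposeFin_symm_eq_swap_mul_s5 1]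
        exact Nat.add_le_add_left (hammingDist_swap_mul_le_two_s5 _ _ _) _
  · exact (hammingDist_decomposeFin_symm_s5 p σ ρ).le

theorem expect_perm_fin_succ {M : Type*} [AddCommMonoid M] [Module ℚ≥0 M]
    (f : Equiv.Perm (Fin (n + 1)) → M) :
    𝔼 σ, f σ = 𝔼 p, 𝔼 σ, f (decomposeFin.symm (p, σ)) :=
  calc 𝔼 σ, f σ = 𝔼 x : Fin (n + 1) × Equiv.Perm (Fin n), f (decomposeFin.symm (x.1, x.2)) :=
        Fintype.expect_equiv decomposeFin _ _ fun σ => by simp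
    _ = 𝔼 p, 𝔼 σ, f (decomposeFin.symm (p, σ)) :=
        expect_product' univ univ fun p σ => f (decomposeFin.symm (p, σ))

theorem inv_add_one_le_log_sub_log {x : ℝ} (hx : 0 < x) :
    (x + 1)⁻¹ ≤ Real.log (x + 1) - Real.log x := by
  have hx1 : 0 < x + 1 := by positivity
  calc (x + 1)⁻¹ = 1 - ((x + 1) / x)⁻¹ := by field_simp; ring
    _ ≤ Real.log ((x + 1) / x) := Real.one_sub_inv_le_log_of_pos (by positivity)
    _ = Real.log (x + 1) - Real.log x := Real.log_div hx1.ne' hx.ne'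

theorem exists_isConj_finRotate_expect_hammingDist_le (n : ℕ) :
    ∃ g : Equiv.Perm (Fin (n + 1)) → Equiv.Perm (Fin (n + 1)),
      (∀ σ, IsConj (finRotate (n + 1)) (g σ)) ∧
        𝔼 σ : Equiv.Perm (Fin (n + 1)), (hammingDist ⇑σ ⇑(g σ) : ℝ) ≤ 2 * Real.log (n + 1) := by
  induction n with
  | zero =>
    have (σ : Equiv.Perm (Fin 1)) : finRotate 1 = σ := Subsingleton.elim _ _
    exact ⟨id, fun σ => this σ ▸ .refl _, by simp⟩
  | succ n ih =>
    obtain ⟨g, hconj, hdist⟩ := ih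
    set raise : Fin (n + 2) → Fin (n + 2) := fun p => if p = 0 then 1 else p
    have hraise (p) : raise p ≠ 0 := by by_cases h : p = 0 <;> simp [raise, h]
    refine ⟨fun σ => decomposeFin.symm (raise (decomposeFin σ).1, g (decomposeFin σ).2),
      fun σ => isConj_finRotate_decomposeFin_symm (hconj _) (hraise _), ?_⟩
    calc 𝔼 σ : Equiv.Perm (Fin (n + 2)), (hammingDist ⇑σ
            ⇑(decomposeFin.symm (raise (decomposeFin σ).1, g (decomposeFin σ).2)) : ℝ)
        = 𝔼 p, 𝔼 σ, (hammingDist ⇑(decomposeFin.symm (p, σ))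
            ⇑(decomposeFin.symm (raise p, g σ)) : ℝ) := by
          simp only [expect_perm_fin_succ, Equiv.apply_symm_apply]
      _ ≤ 𝔼 p : Fin (n + 2), 𝔼 σ : Equiv.Perm (Fin (n + 1)),
            ((hammingDist ⇑σ ⇑(g σ) : ℝ) + if p = 0 then 2 else 0) :=
          expect_le_expect fun p _ => expect_le_expect fun σ _ =>
            mod_cast hammingDist_decomposeFin_symm_ite_le p σ (g σ)
      _ = 𝔼 σ : Equiv.Perm (Fin (n + 1)), (hammingDist ⇑σ ⇑(g σ) : ℝ) +
            2 * ((n + 1 : ℝ) + 1)⁻¹ := by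
          simp only [expect_add_distrib, Fintype.expect_const]
          rw [Fintype.expect_eq_sum_div_card fun p : Fin (n + 2) => if p = 0 then (2 : ℝ) else 0]
          simp [div_eq_mul_inv, add_assoc, one_add_one_eq_two]
      _ ≤ 2 * Real.log ((n + 1 : ℕ) + 1) := by
          have := inv_add_one_le_log_sub_log (x := n + 1) (by positivity)
          push_cast
          linarith

end CycleCoupling

section AsymptoticIndependence

theorem exists_forall_iff_lt_of_antitone {ι : Type*} [Finite ι] (T : ι → ℕ) {p : ℕ → Prop}
    (hp : Antitone p) : ∃ t, ∀ i, p (T i) ↔ T i < t := by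
  by_cases h : ∃ m, ¬p m
  · refine ⟨Nat.find h, fun i => ⟨fun hi => ?_, fun hi => not_not.1 (Nat.find_min h hi)⟩⟩
    exact lt_of_not_ge fun hge => Nat.find_spec h (hp hge hi)
  · obtain ⟨M, hM⟩ := (Set.finite_range T).bddAbove
    push Not at h
    exact ⟨M + 1, fun i => iff_of_true (h _) (Nat.lt_succ_of_le (hM ⟨i, rfl⟩))⟩

theorem exists_forall_kendallTauBar_le_iff (n : ℕ) (a : ℝ) :
    ∃ t, ∀ σ : Equiv.Perm (Fin n), kendallTauBar σ ≤ a ↔ kendallTau σ < t :=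
  exists_forall_iff_lt_of_antitone kendallTau fun k l hkl hl =>
    (by gcongr : (k - _ : ℝ) / _ ≤ (l - _) / _).trans hl

theorem exists_dist_kendallTau_conj_le (n : ℕ) :
    ∃ d : Equiv.Perm (Fin (n + 1)) → ℕ, 𝔼 σ, (d σ : ℝ) ≤ 2 * Real.log (n + 1) ∧
      ∀ σ σ', ∃ ρ, ∀ π, Nat.dist (kendallTau (π * σ * π⁻¹))
        (kendallTau (π * (ρ * σ' * ρ⁻¹) * π⁻¹)) ≤ 2 * (n + 1) * d σ + 2 * (n + 1) * d σ' := by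
  obtain ⟨g, hconj, hdist⟩ := exists_isConj_finRotate_expect_hammingDist_le n
  refine ⟨fun σ => hammingDist ⇑σ ⇑(g σ), hdist, fun σ σ' => ?_⟩
  obtain ⟨ρ, hρ⟩ := isConj_iff.1 ((hconj σ').symm.trans (hconj σ))
  refine ⟨ρ, fun π => (dist_kendallTau_le _ _).trans ?_⟩
  rw [hammingDist_perm_conj, ← mul_add]
  gcongr
  calc hammingDist ⇑σ ⇑(ρ * σ' * ρ⁻¹)
      ≤ hammingDist ⇑σ ⇑(g σ) + hammingDist ⇑(g σ) ⇑(ρ * σ' * ρ⁻¹) := hammingDist_triangle _ _ _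
    _ = hammingDist ⇑σ ⇑(g σ) + hammingDist ⇑σ' ⇑(g σ') := by
        rw [← hρ, hammingDist_perm_conj, hammingDist_comm ⇑(g σ')]

theorem abs_uniformProb_kendallTau_lt_and_sub_mul_le {n : ℕ} {B : Equiv.Perm (Fin (n + 1)) → Prop}
    (hB : ∀ a σ, B (a * σ * a⁻¹) ↔ B σ) (t : ℕ) :
    |uniformProb (fun σ : Equiv.Perm (Fin (n + 1)) => kendallTau σ < t ∧ B σ) -
        uniformProb (fun σ : Equiv.Perm (Fin (n + 1)) => kendallTau σ < t) * uniformProb B| ≤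
      256 * Real.log (n + 1) / √(n + 1) := by
  obtain ⟨d, hd, hdist⟩ := exists_dist_kendallTau_conj_le n
  have hwindow (σ : Equiv.Perm (Fin (n + 1))) :
      uniformProb (fun ρ : Equiv.Perm (Fin (n + 1)) => kendallTau ρ ∈
        Ico (t - 2 * (2 * (n + 1) * d σ)) (t + 2 * (2 * (n + 1) * d σ))) ≤
        64 / √(n + 1) * d σ := by
    have hwidth : 2 * (2 * (n + 1) * d σ) = 4 * d σ * (n + 1) := by ring
    rw [hwidth]
    refine (uniformProb_kendallTau_mem_Ico_le n.succ_pos t (4 * d σ)).trans_eq ?_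
    push_cast
    ring
  calc _ ≤ 2 * 𝔼 σ, uniformProb (fun ρ : Equiv.Perm (Fin (n + 1)) => kendallTau ρ ∈
          Ico (t - 2 * (2 * (n + 1) * d σ)) (t + 2 * (2 * (n + 1) * d σ))) :=
        abs_uniformProb_lt_and_sub_mul_le hdist hB t
    _ ≤ 2 * 𝔼 σ, 64 / √(n + 1) * (d σ : ℝ) := by gcongr with σ; exact hwindow σ
    _ = 128 / √(n + 1) * 𝔼 σ, (d σ : ℝ) := by rw [← mul_expect]; ring
    _ ≤ 128 / √(n + 1) * (2 * Real.log (n + 1)) := by gcongr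
    _ = 256 * Real.log (n + 1) / √(n + 1) := by ring

theorem kendallTauBar_asymp_indep_classFun_general {n : ℕ} (hn : 2 ≤ n)
    {B : Equiv.Perm (Fin n) → Prop} (hB : ∀ a σ, B (a * σ * a⁻¹) ↔ B σ) (a : ℝ) :
    |Pn (fun σ => kendallTauBar σ ≤ a ∧ B σ) -
        Pn (fun σ : Equiv.Perm (Fin n) => kendallTauBar σ ≤ a) * Pn B| ≤
      256 * Real.log n / √n := by
  obtain ⟨m, rfl⟩ := Nat.exists_eq_succ_of_ne_zero (by omega : n ≠ 0)
  obtain ⟨t, ht⟩ := exists_forall_kendallTauBar_le_iff (m + 1) a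
  simpa only [ht, Pn_eq_uniformProb, Nat.cast_succ] using
    abs_uniformProb_kendallTau_lt_and_sub_mul_le hB t

end AsymptoticIndependence

/-- Any weakly convergent sequence of class functions is asymptotically independent of
the normalized Kendall's tau, at rate `log n / √n`. -/
theorem kendallTauBar_asymp_indep_classFun
    (f : ∀ n : ℕ, Equiv.Perm (Fin n) → ℝ)
    (hclass : ∀ n : ℕ, ∀ a σ : Equiv.Perm (Fin n), f n (a * σ * a⁻¹) = f n σ)
    (hweak : ∃ μ : MeasureTheory.Measure ℝ, MeasureTheory.IsProbabilityMeasure μ ∧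
      ∀ g : ℝ → ℝ, Continuous g → (∃ C : ℝ, ∀ x, |g x| ≤ C) →
        Tendsto (fun n : ℕ => En (fun σ => g (f n σ))) atTop (nhds (∫ x, g x ∂μ))) :
    ∃ C : ℝ, ∀ n : ℕ, 2 ≤ n → ∀ a b : ℝ,
      |Pn (fun σ : Equiv.Perm (Fin n) => kendallTauBar σ ≤ a ∧ f n σ ≤ b) -
        Pn (fun σ : Equiv.Perm (Fin n) => kendallTauBar σ ≤ a) *
          Pn (fun σ : Equiv.Perm (Fin n) => f n σ ≤ b)| ≤
        C * Real.log n / Real.sqrt n :=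
  ⟨256, fun _ hn a _ =>
    kendallTauBar_asymp_indep_classFun_general hn (fun c σ => by rw [hclass]) a⟩
end
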